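/- For every x in the open interval (a,b), the symmetric partial sums S_N(x) = ∑_{n=−N}^{N} C_n (f_n(x), g_n(x)) converge, as N → ∞, to (F₁(x), F₂(x)). -/

import Mathlib

/-- The pair `(f,g)`, continuously differentiable on `[a,b]`, satisfies the
Dirac-type system with parameter `lam`:
`-g' + t g + (p - lam ρ) f = 0` and `f' + t f + (q - lam ρ) g = 0` on `[a,b]`. -/
def SatisfiesDiracSystem (a b : ℝ) (p q t ρ : ℝ → ℝ) (lam : ℝ) (f g : ℝ → ℝ) : Prop :=
  ∃ f' g' : ℝ → ℝ,
    (∀ x ∈ Set.Icc a b, HasDerivWithinAt f (f' x) (Set.Icc a b) x) ∧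
    (∀ x ∈ Set.Icc a b, HasDerivWithinAt g (g' x) (Set.Icc a b) x) ∧
    ContinuousOn f' (Set.Icc a b) ∧ ContinuousOn g' (Set.Icc a b) ∧
    (∀ x ∈ Set.Icc a b, -g' x + t x * g x + (p x - lam * ρ x) * f x = 0) ∧
    (∀ x ∈ Set.Icc a b, f' x + t x * f x + (q x - lam * ρ x) * g x = 0)

/-- The separated boundary conditions
`f(a) cos α + g(a) sin α = 0` and `f(b) cos β + g(b) sin β = 0`. -/
def DiracBC (a b α β : ℝ) (f g : ℝ → ℝ) : Prop :=
  f a * Real.cos α + g a * Real.sin α = 0 ∧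
  f b * Real.cos β + g b * Real.sin β = 0

/-- `lam` is an eigenvalue of the Dirac-type boundary-value problem. -/
def IsDiracEigenvalue (a b : ℝ) (p q t ρ : ℝ → ℝ) (α β lam : ℝ) : Prop :=
  ∃ f g : ℝ → ℝ,
    SatisfiesDiracSystem a b p q t ρ lam f g ∧
    (∃ x ∈ Set.Icc a b, (f x ≠ 0 ∨ g x ≠ 0)) ∧
    DiracBC a b α β f g

noncomputable section
open Set Filter Topology MeasureTheory ComplexConjugate
namespace DiracExp

/-- complex form of the Dirac system -/
def IsSol (a b : ℝ) (ρ s : ℝ → ℝ) (m : ℝ → ℂ) (lam : ℝ) (z : ℝ → ℂ) : Prop :=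
  ∀ x ∈ Icc a b, HasDerivWithinAt z
    (-Complex.I * ((lam * ρ x - s x : ℝ) : ℂ) * z x + m x * conj (z x)) (Icc a b) x

structure DData (a b : ℝ) (ρ s : ℝ → ℝ) (m : ℝ → ℂ) : Prop where
  hab : a < b
  hρ : ContDiffOn ℝ 1 ρ (Icc a b)
  hpos : ∀ x ∈ Icc a b, 0 < ρ x
  hs : ContinuousOn s (Icc a b)
  hm : ContDiffOn ℝ 1 m (Icc a b)

lemma IsSol.continuousOn {a b : ℝ} {ρ s : ℝ → ℝ} {m : ℝ → ℂ} {lam : ℝ} {z : ℝ → ℂ}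
    (h : IsSol a b ρ s m lam z) : ContinuousOn z (Icc a b) :=
  fun x hx => (h x hx).continuousWithinAt

lemma deriv_Ici {E : Type*} [NormedAddCommGroup E] [NormedSpace ℝ E] {a b x : ℝ} {z : ℝ → E} {z' : E}
    (hx : x ∈ Ico a b) (h : HasDerivWithinAt z z' (Icc a b) x) : HasDerivWithinAt z z' (Ici x) x :=
  h.mono_of_mem_nhdsWithin (mem_of_superset (Icc_mem_nhdsGE hx.2) (Icc_subset_Icc_left hx.1))

/-- primitive -/
def prim (a : ℝ) (φ : ℝ → ℝ) (x : ℝ) : ℝ := ∫ y in a..x, φ y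

lemma prim_self (a : ℝ) (φ : ℝ → ℝ) : prim a φ a = 0 := by simp [prim]

lemma prim_hasDeriv {a b : ℝ} (hab : a ≤ b) {φ : ℝ → ℝ} (h : ContinuousOn φ (Icc a b)) {x : ℝ}
    (hx : x ∈ Icc a b) : HasDerivWithinAt (prim a φ) (φ x) (Icc a b) x := by
  have hc : Continuous (IccExtend hab (domRestrict (Icc a b) φ)) :=
    (continuousOn_iff_continuous_domRestrict.1 h).Icc_extend'
  have hd := (hc.integral_hasStrictDerivAt a x).hasDerivAt.hasDerivWithinAt (s := Icc a b)
  have e : ∀ y ∈ Icc a b, IccExtend hab (domRestrict (Icc a b) φ) y = φ y := fun y hy => by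
    rw [IccExtend_of_mem _ _ hy]; rfl
  rw [e x hx] at hd
  have e2 : ∀ y ∈ Icc a b, prim a φ y = ∫ u in a..y, IccExtend hab (domRestrict (Icc a b) φ) u := by
    intro y hy
    unfold prim
    apply intervalIntegral.integral_congr
    intro u hu
    rw [uIcc_of_le hy.1] at hu
    exact (e u ⟨hu.1, hu.2.trans hy.2⟩).symm
  exact hd.congr e2 (e2 x hx)

lemma prim_cont {a b : ℝ} (hab : a ≤ b) {φ : ℝ → ℝ} (h : ContinuousOn φ (Icc a b)) :
    ContinuousOn (prim a φ) (Icc a b) := fun _ hx => (prim_hasDeriv hab h hx).continuousWithinAt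

lemma exists_bound {a b : ℝ} {E : Type*} [NormedAddCommGroup E] {φ : ℝ → E}
    (h : ContinuousOn φ (Icc a b)) : ∃ B : ℝ, 0 < B ∧ ∀ x ∈ Icc a b, ‖φ x‖ ≤ B := by
  obtain ⟨B, hB⟩ := isCompact_Icc.exists_bound_of_continuousOn h
  exact ⟨max B 1, by positivity, fun x hx => (hB x hx).trans (le_max_left _ _)⟩

lemma c1_deriv {a b : ℝ} (hab : a < b) {E : Type*} [NormedAddCommGroup E] [NormedSpace ℝ E]
    {φ : ℝ → E} (h : ContDiffOn ℝ 1 φ (Icc a b)) :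
    ContinuousOn (derivWithin φ (Icc a b)) (Icc a b) ∧
    ∀ x ∈ Icc a b, HasDerivWithinAt φ (derivWithin φ (Icc a b) x) (Icc a b) x := by
  refine ⟨h.continuousOn_derivWithin (uniqueDiffOn_Icc hab) le_rfl, fun x hx => ?_⟩
  exact (h.differentiableOn (by norm_num) x hx).hasDerivWithinAt

/-- bridge from the real system -/
lemma isSol_of_satisfies {a b : ℝ} {p q t ρ : ℝ → ℝ} {lam : ℝ} {f g : ℝ → ℝ}
    (h : SatisfiesDiracSystem a b p q t ρ lam f g) :
    IsSol a b ρ (fun x => (p x + q x) / 2) (fun x => -(t x : ℂ) + Complex.I * ((p x - q x) / 2 : ℝ)) lam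
      (fun x => (f x : ℂ) + (g x : ℂ) * Complex.I) := by
  obtain ⟨f', g', hf, hg, -, -, h1, h2⟩ := h
  intro x hx
  have := ((hf x hx).ofReal_comp).add (((hg x hx).ofReal_comp).mul_const Complex.I)
  refine this.congr_deriv ?_
  have e1 : g' x = t x * g x + (p x - lam * ρ x) * f x := by linarith [h1 x hx]
  have e2 : f' x = -(t x * f x + (q x - lam * ρ x) * g x) := by linarith [h2 x hx]
  rw [e1, e2]
  apply Complex.ext <;> simp <;> ring

lemma satisfies_of_isSol {a b : ℝ} {p q t ρ : ℝ → ℝ} {lam : ℝ} {z : ℝ → ℂ}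
    (hp : ContinuousOn p (Icc a b)) (hq : ContinuousOn q (Icc a b))
    (ht : ContinuousOn t (Icc a b)) (hρ : ContinuousOn ρ (Icc a b))
    (h : IsSol a b ρ (fun x => (p x + q x) / 2)
      (fun x => -(t x : ℂ) + Complex.I * ((p x - q x) / 2 : ℝ)) lam z) :
    SatisfiesDiracSystem a b p q t ρ lam (fun x => (z x).re) (fun x => (z x).im) := by
  have hre : ContinuousOn (fun x => (z x).re) (Icc a b) := Complex.continuous_re.comp_continuousOn h.continuousOn
  have him : ContinuousOn (fun x => (z x).im) (Icc a b) := Complex.continuous_im.comp_continuousOn h.continuousOn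
  refine ⟨fun x => -(t x * (z x).re + (q x - lam * ρ x) * (z x).im),
    fun x => t x * (z x).im + (p x - lam * ρ x) * (z x).re, ?_, ?_, by fun_prop, by fun_prop, ?_, ?_⟩
  · intro x hx
    have := (Complex.reCLM.hasFDerivAt.comp_hasDerivWithinAt x (h x hx))
    refine this.congr_deriv ?_
    simp; ring
  · intro x hx
    have := (Complex.imCLM.hasFDerivAt.comp_hasDerivWithinAt x (h x hx))
    refine this.congr_deriv ?_
    simp; ring
  · intro x hx; ring
  · intro x hx; ring

/-- clamp -/
def clampC (R : ℝ) (z : ℂ) : ℂ := ⟨max (-R) (min R z.re), max (-R) (min R z.im)⟩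

lemma clamp_lip (R x y : ℝ) : |max (-R) (min R x) - max (-R) (min R y)| ≤ |x - y| := by
  refine (abs_max_sub_max_le_max _ _ _ _).trans ?_
  rw [sub_self, abs_zero, max_eq_right (abs_nonneg _)]
  refine (abs_min_sub_min_le_max _ _ _ _).trans ?_
  rw [sub_self, abs_zero, max_eq_right (abs_nonneg _)]

lemma clampC_lip (R : ℝ) (z w : ℂ) : ‖clampC R z - clampC R w‖ ≤ 2 * ‖z - w‖ := by
  refine (Complex.norm_le_abs_re_add_abs_im _).trans ?_
  have h1 := clamp_lip R z.re w.re
  have h2 := clamp_lip R z.im w.im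
  have h3 := Complex.abs_re_le_norm (z - w)
  have h4 := Complex.abs_im_le_norm (z - w)
  simp only [Complex.sub_re, Complex.sub_im, clampC] at *
  linarith

lemma clampC_zero {R : ℝ} (hR : 0 ≤ R) : clampC R 0 = 0 := by
  apply Complex.ext <;> simp [clampC, hR]

lemma clampC_eq {R : ℝ} {z : ℂ} (hz : ‖z‖ ≤ R) : clampC R z = z := by
  have h3 := abs_le.1 ((Complex.abs_re_le_norm z).trans hz)
  have h4 := abs_le.1 ((Complex.abs_im_le_norm z).trans hz)
  apply Complex.ext <;> simp [clampC, h3.1, h3.2, h4.1, h4.2]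

lemma clampC_norm {R : ℝ} (hR : 0 ≤ R) (z : ℂ) : ‖clampC R z‖ ≤ 2 * R := by
  refine (Complex.norm_le_abs_re_add_abs_im _).trans ?_
  have h : ∀ x : ℝ, |max (-R) (min R x)| ≤ R := fun x =>
    abs_le.2 ⟨le_max_left _ _, max_le (by linarith) (min_le_left _ _)⟩
  simp only [clampC]
  linarith [h z.re, h z.im]

/-- Global existence for linear-type ODEs in the plane. -/
lemma ode_exists {a b : ℝ} (hab : a < b) (v : ℝ → ℂ → ℂ) {K : ℝ} (hK : 0 ≤ K)
    (hv : ∀ x ∈ Icc a b, ∀ z w, ‖v x z - v x w‖ ≤ K * ‖z - w‖) (hv0 : ∀ x, v x 0 = 0)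
    (hc : ∀ z, ContinuousOn (fun x => v x z) (Icc a b)) (z0 : ℂ) :
    ∃ z : ℝ → ℂ, z a = z0 ∧ ∀ x ∈ Icc a b, HasDerivWithinAt z (v x (z x)) (Icc a b) x := by
  set R : ℝ := ‖z0‖ * Real.exp (2 * K * (b - a)) with hR
  have hR0 : 0 ≤ R := by positivity
  have hba : 0 ≤ b - a := by linarith
  let V : ℝ → ℂ → ℂ := fun x z => v x (clampC R z)
  have hVlip : ∀ x ∈ Icc a b, ∀ z w, ‖V x z - V x w‖ ≤ 2 * K * ‖z - w‖ := by
    intro x hx z w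
    refine (hv x hx _ _).trans ?_
    have := mul_le_mul_of_nonneg_left (clampC_lip R z w) hK
    linarith
  have hVb : ∀ x ∈ Icc a b, ∀ z, ‖V x z‖ ≤ K * (2 * R) := by
    intro x hx z
    have := hv x hx (clampC R z) 0
    rw [hv0, sub_zero, sub_zero] at this
    exact this.trans (mul_le_mul_of_nonneg_left (clampC_norm hR0 z) hK)
  have hPL : IsPicardLindelof V (tmin := a) (tmax := b) ⟨a, le_rfl, hab.le⟩ z0
      (⟨K * (2 * R) * (b - a), by positivity⟩) 0 ⟨K * (2 * R), by positivity⟩ ⟨2 * K, by positivity⟩ := by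
    refine ⟨?_, ?_, ?_, ?_⟩
    · intro x hx
      apply LipschitzWith.lipschitzOnWith
      apply LipschitzWith.of_dist_le_mul
      intro z w
      rw [dist_eq_norm, dist_eq_norm]
      exact hVlip x hx z w
    · intro z _
      exact hc (clampC R z)
    · intro x hx z _
      exact hVb x hx z
    · simp [hba]; exact le_rfl
  obtain ⟨z, hza, hz⟩ := hPL.exists_eq_forall_mem_Icc_hasDerivWithinAt₀
  refine ⟨z, hza, fun x hx => ?_⟩
  have hg := norm_le_gronwallBound_of_norm_deriv_right_le (f := z) (f' := fun x => V x (z x))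
    (δ := ‖z0‖) (K := 2 * K) (ε := 0) (a := a) (b := b)
    (fun x hx => (hz x hx).continuousWithinAt)
    (fun x hx => deriv_Ici hx (hz x (Ico_subset_Icc_self hx))) (by rw [← hza]) (by
      intro x hx
      have := hVlip x (Ico_subset_Icc_self hx) (z x) 0
      simp only [V, clampC_zero hR0, hv0, sub_zero] at this
      simpa using this) x hx
  rw [gronwallBound_ε0] at hg
  have hzx : ‖z x‖ ≤ R := by
    refine hg.trans ?_
    rw [hR]
    gcongr
    exact hx.2
  have := hz x hx
  simp only [V, clampC_eq hzx] at this
  exact this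

lemma vf_lip {ρ s : ℝ → ℝ} {m : ℝ → ℂ} (lam : ℝ) {B x : ℝ} (_hB0 : 0 ≤ B) (h1 : ‖ρ x‖ ≤ B) (h2 : ‖s x‖ ≤ B)
    (h3 : ‖m x‖ ≤ B) (z w : ℂ) :
    ‖(-Complex.I * ((lam * ρ x - s x : ℝ) : ℂ) * z + m x * conj z)
      - (-Complex.I * ((lam * ρ x - s x : ℝ) : ℂ) * w + m x * conj w)‖ ≤ (|lam| * B + B + B) * ‖z - w‖ := by
  have e : (-Complex.I * ((lam * ρ x - s x : ℝ) : ℂ) * z + m x * conj z)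
      - (-Complex.I * ((lam * ρ x - s x : ℝ) : ℂ) * w + m x * conj w) =
      -Complex.I * ((lam * ρ x - s x : ℝ) : ℂ) * (z - w) + m x * conj (z - w) := by
    simp only [map_sub]; ring
  rw [e]
  refine (norm_add_le _ _).trans ?_
  simp only [norm_mul, norm_neg, Complex.norm_I, one_mul, RCLike.norm_conj, Complex.norm_real]
  have h4 : ‖lam * ρ x - s x‖ ≤ |lam| * B + B := by
    refine (norm_sub_le _ _).trans ?_
    rw [norm_mul, Real.norm_eq_abs lam]
    gcongr
  have := mul_le_mul_of_nonneg_right h4 (norm_nonneg (z - w))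
  have := mul_le_mul_of_nonneg_right h3 (norm_nonneg (z - w))
  linarith

section D
variable {a b : ℝ} {ρ s : ℝ → ℝ} {m : ℝ → ℂ} (D : DData a b ρ s m)
include D

lemma DData.bound : ∃ B : ℝ, 0 < B ∧ ∀ x ∈ Icc a b, ‖ρ x‖ ≤ B ∧ ‖s x‖ ≤ B ∧ ‖m x‖ ≤ B := by
  obtain ⟨B1, h1, h1'⟩ := exists_bound D.hρ.continuousOn
  obtain ⟨B2, h2, h2'⟩ := exists_bound D.hs
  obtain ⟨B3, h3, h3'⟩ := exists_bound D.hm.continuousOn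
  refine ⟨B1 + B2 + B3, by positivity, fun x hx => ⟨?_, ?_, ?_⟩⟩
  · linarith [h1' x hx]
  · linarith [h2' x hx]
  · linarith [h3' x hx]

lemma DData.exists_sol (lam : ℝ) (z0 : ℂ) : ∃ z, z a = z0 ∧ IsSol a b ρ s m lam z := by
  obtain ⟨B, hB, h⟩ := D.bound
  have h1 := D.hρ.continuousOn
  have h2 := D.hs
  have h3 := D.hm.continuousOn
  exact ode_exists D.hab (fun x z => -Complex.I * ((lam * ρ x - s x : ℝ) : ℂ) * z + m x * conj z)
    (K := |lam| * B + B + B) (by positivity)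
    (fun x hx z w => vf_lip lam hB.le (h x hx).1 (h x hx).2.1 (h x hx).2.2 z w) (by simp)
    (fun z => by
      have : ContinuousOn (fun x => ((lam * ρ x - s x : ℝ) : ℂ)) (Icc a b) :=
        Complex.continuous_ofReal.comp_continuousOn (by fun_prop)
      fun_prop) z0

/-- continuous dependence on the parameter -/
lemma DData.cont_dep (lam0 : ℝ) : ∃ K : ℝ, 0 < K ∧ ∀ lam z w, IsSol a b ρ s m lam z → IsSol a b ρ s m lam0 w →
    z a = w a → |lam - lam0| ≤ 1 → ‖z b - w b‖ ≤ K * |lam - lam0| * ‖z a‖ := by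
  obtain ⟨B, hB, h⟩ := D.bound
  set Q := (|lam0| + 1) * B + B + B with hQ
  have hQ0 : 0 < Q := by positivity
  have hba : 0 < b - a := by linarith [D.hab]
  refine ⟨B * Real.exp (Q * (b - a)) * ((Real.exp (Q * (b - a))) / Q + 1), by positivity, ?_⟩
  intro lam z w hz hw hzw hl
  have hz1 : ∀ lam z, |lam - lam0| ≤ 1 → IsSol a b ρ s m lam z → ∀ x ∈ Icc a b,
      ‖z x‖ ≤ ‖z a‖ * Real.exp (Q * (b - a)) := by
    intro lam z hl hz x hx
    have hg := norm_le_gronwallBound_of_norm_deriv_right_le (f := z)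
      (δ := ‖z a‖) (K := Q) (ε := 0) (a := a) (b := b) hz.continuousOn
      (fun x hx => deriv_Ici hx (hz x (Ico_subset_Icc_self hx))) le_rfl (by
        intro x hx
        have hx := Ico_subset_Icc_self hx
        have := vf_lip (ρ := ρ) (s := s) (m := m) lam hB.le (h x hx).1 (h x hx).2.1 (h x hx).2.2 (z x) 0
        simp only [map_zero, mul_zero, add_zero, sub_zero] at this ⊢
        refine this.trans ?_
        gcongr
        rw [hQ]
        gcongr
        have := abs_add_le (lam - lam0) lam0
        simp only [sub_add_cancel] at this
        linarith) x hx
    rw [gronwallBound_ε0] at hg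
    refine hg.trans ?_
    gcongr
    exact hx.2
  have hd := norm_le_gronwallBound_of_norm_deriv_right_le (f := fun x => z x - w x)
      (δ := 0) (K := Q) (ε := |lam - lam0| * B * (‖z a‖ * Real.exp (Q * (b - a)))) (a := a) (b := b)
      (hz.continuousOn.sub hw.continuousOn)
      (fun x hx => (deriv_Ici hx (hz x (Ico_subset_Icc_self hx))).sub
        (deriv_Ici hx (hw x (Ico_subset_Icc_self hx)))) (by simp [hzw]) (by
        intro x hx
        have hx := Ico_subset_Icc_self hx
        have := vf_lip (ρ := ρ) (s := s) (m := m) lam0 hB.le (h x hx).1 (h x hx).2.1 (h x hx).2.2 (z x) (w x)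
        have e : -Complex.I * ((lam * ρ x - s x : ℝ) : ℂ) * z x + m x * conj (z x)
          - (-Complex.I * ((lam0 * ρ x - s x : ℝ) : ℂ) * w x + m x * conj (w x)) =
          (-Complex.I * ((lam0 * ρ x - s x : ℝ) : ℂ) * z x + m x * conj (z x)
          - (-Complex.I * ((lam0 * ρ x - s x : ℝ) : ℂ) * w x + m x * conj (w x))) +
          -Complex.I * ((lam - lam0 : ℝ) : ℂ) * ((ρ x : ℝ) : ℂ) * z x := by
            push_cast; ring
        rw [e]
        refine (norm_add_le _ _).trans ?_
        refine add_le_add (this.trans ?_) ?_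
        · gcongr
          rw [hQ]
          gcongr
          linarith
        · simp only [norm_mul, norm_neg, Complex.norm_I, one_mul, Complex.norm_real, Real.norm_eq_abs (lam - lam0)]
          gcongr
          · exact (h x hx).1
          · exact hz1 lam z hl hz x hx) b ⟨D.hab.le, le_rfl⟩
  rw [gronwallBound_of_K_ne_0 hQ0.ne'] at hd
  simp only [zero_mul, zero_add] at hd
  refine hd.trans ?_
  have e1 := Real.exp_pos (Q * (b - a))
  have : |lam - lam0| * B * (‖z a‖ * Real.exp (Q * (b - a))) / Q * (Real.exp (Q * (b - a)) - 1) ≤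
     |lam - lam0| * B * (‖z a‖ * Real.exp (Q * (b - a))) / Q * (Real.exp (Q * (b - a)) + Q) := by
    gcongr; linarith
  refine this.trans (le_of_eq ?_)
  field_simp

end D
end DiracExp

end

noncomputable section
open Set Filter Topology MeasureTheory ComplexConjugate
namespace DiracExp

/-- phase factor -/
def ph (a : ℝ) (ρ s : ℝ → ℝ) (lam x : ℝ) : ℂ :=
  Complex.exp (((lam * prim a ρ x - prim a s x : ℝ) : ℂ) * Complex.I)

lemma ph_norm (a : ℝ) (ρ s : ℝ → ℝ) (lam x : ℝ) : ‖ph a ρ s lam x‖ = 1 :=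
  Complex.norm_exp_ofReal_mul_I _

lemma ph_conj (a : ℝ) (ρ s : ℝ → ℝ) (lam x : ℝ) : ph a ρ s lam x * conj (ph a ρ s lam x) = 1 := by
  rw [Complex.mul_conj, Complex.normSq_eq_norm_sq, ph_norm]; simp

lemma ph_self (a : ℝ) (ρ s : ℝ → ℝ) (lam : ℝ) : ph a ρ s lam a = 1 := by
  simp [ph, prim_self]

section D
variable {a b : ℝ} {ρ s : ℝ → ℝ} {m : ℝ → ℂ} (D : DData a b ρ s m)
include D

lemma DData.ph_deriv (lam : ℝ) {x : ℝ} (hx : x ∈ Icc a b) :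
    HasDerivWithinAt (ph a ρ s lam)
      (ph a ρ s lam x * (Complex.I * ((lam * ρ x - s x : ℝ) : ℂ))) (Icc a b) x := by
  have h1 := prim_hasDeriv D.hab.le D.hρ.continuousOn hx
  have h2 := prim_hasDeriv D.hab.le D.hs hx
  have := ((((h1.const_mul lam).sub h2).ofReal_comp).mul_const Complex.I).cexp
  refine this.congr_deriv ?_
  simp only [ph]
  simp
  ring

lemma DData.w_deriv {lam : ℝ} {z : ℝ → ℂ} (hz : IsSol a b ρ s m lam z) {x : ℝ} (hx : x ∈ Icc a b) :
    HasDerivWithinAt (fun x => ph a ρ s lam x * z x)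
      (ph a ρ s lam x * (m x * conj (z x))) (Icc a b) x := by
  refine ((D.ph_deriv lam hx).mul (hz x hx)).congr_deriv ?_
  ring

/-- main bounds on solutions, uniform in the parameter -/
lemma DData.bounds : ∃ K : ℝ, 0 < K ∧ ∀ lam z, IsSol a b ρ s m lam z →
    (∀ x ∈ Icc a b, ‖z x‖ ≤ K * ‖z a‖) ∧
    (∀ x ∈ Icc a b, ∀ y ∈ Icc a b,
      |lam| * ‖ph a ρ s lam x * z x - ph a ρ s lam y * z y‖ ≤ K * ‖z a‖) := by
  obtain ⟨B, hB, h⟩ := D.bound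
  have hba : 0 < b - a := by linarith [D.hab]
  obtain ⟨hm'c, hm'⟩ := c1_deriv D.hab D.hm
  obtain ⟨hρ'c, hρ'⟩ := c1_deriv D.hab D.hρ
  set m' := derivWithin m (Icc a b)
  set ρ' := derivWithin ρ (Icc a b)
  have hSd : ∀ x ∈ Icc a b, HasDerivWithinAt (prim a s) (s x) (Icc a b) x :=
    fun x hx => prim_hasDeriv D.hab.le D.hs hx
  have hSc := prim_cont D.hab.le D.hs
  have hmc := D.hm.continuousOn
  have hρc := D.hρ.continuousOn
  have hsc := D.hs
  have hne : ∀ x ∈ Icc a b, ρ x ≠ 0 := fun x hx => (D.hpos x hx).ne'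
  -- Q and its derivative
  let e : ℝ → ℂ := fun x => Complex.exp ((prim a s x : ℂ) * (-2 * Complex.I))
  have hec : ContinuousOn e (Icc a b) := by
    have : ContinuousOn (fun x => (prim a s x : ℂ)) (Icc a b) := Complex.continuous_ofReal.comp_continuousOn hSc
    fun_prop
  let Q : ℝ → ℂ := fun x => m x * e x * (((ρ x)⁻¹ : ℝ) : ℂ)
  let Q' : ℝ → ℂ := fun x => (m' x * e x + m x * (e x * ((s x : ℂ) * (-2 * Complex.I)))) * (((ρ x)⁻¹ : ℝ) : ℂ)
    + m x * e x * ((-ρ' x / (ρ x) ^ 2 : ℝ) : ℂ)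
  have hQd : ∀ x ∈ Icc a b, HasDerivWithinAt Q (Q' x) (Icc a b) x := by
    intro x hx
    have h1 : HasDerivWithinAt e (e x * ((s x : ℂ) * (-2 * Complex.I))) (Icc a b) x :=
      (((hSd x hx).ofReal_comp).mul_const _).cexp
    exact ((hm' x hx).mul h1).mul (((hρ' x hx).inv (hne x hx)).ofReal_comp)
  have hQc : ContinuousOn Q (Icc a b) := fun x hx => (hQd x hx).continuousWithinAt
  have hQ'c : ContinuousOn Q' (Icc a b) := by
    have h1 : ContinuousOn (fun x => (((ρ x)⁻¹ : ℝ) : ℂ)) (Icc a b) :=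
      Complex.continuous_ofReal.comp_continuousOn (hρc.inv₀ hne)
    have h2 : ContinuousOn (fun x => ((-ρ' x / (ρ x) ^ 2 : ℝ) : ℂ)) (Icc a b) :=
      Complex.continuous_ofReal.comp_continuousOn
        (hρ'c.neg.div (hρc.pow 2) (fun x hx => pow_ne_zero 2 (hne x hx)))
    have h3 : ContinuousOn (fun x => (s x : ℂ)) (Icc a b) := Complex.continuous_ofReal.comp_continuousOn hsc
    fun_prop
  obtain ⟨B1, hB1, hQb⟩ := exists_bound hQc
  obtain ⟨B2, hB2, hQ'b⟩ := exists_bound hQ'c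
  set G := Real.exp (B * (b - a)) with hG
  have hGpos : 0 < G := Real.exp_pos _
  refine ⟨G + (B1 * G + (B2 + B1 * B) * G / 2 * (b - a)), by positivity, ?_⟩
  intro lam z hz
  have hzb : ∀ x ∈ Icc a b, ‖z x‖ ≤ G * ‖z a‖ := by
    intro x hx
    have hg := norm_le_gronwallBound_of_norm_deriv_right_le (f := fun x => ph a ρ s lam x * z x)
      (δ := ‖z a‖) (K := B) (ε := 0) (a := a) (b := b)
      (fun x hx => (D.w_deriv hz hx).continuousWithinAt)
      (fun x hx => deriv_Ici hx (D.w_deriv hz (Ico_subset_Icc_self hx))) (by simp [ph_norm]) (by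
        intro x hx
        have hx := Ico_subset_Icc_self hx
        simp only [norm_mul, ph_norm, one_mul, RCLike.norm_conj, add_zero]
        gcongr
        exact (h x hx).2.2) x hx
    rw [gronwallBound_ε0, norm_mul, ph_norm, one_mul] at hg
    refine hg.trans ?_
    rw [mul_comm, hG]
    gcongr
    exact hx.2
  refine ⟨fun x hx => (hzb x hx).trans ?_, ?_⟩
  · rw [add_mul]
    have : 0 ≤ (B1 * G + (B2 + B1 * B) * G / 2 * (b - a)) * ‖z a‖ := by positivity
    linarith
  intro x hx y hy
  -- multiply the identity by `lam`
  let E : ℝ → ℂ := fun x => Complex.exp ((prim a ρ x : ℂ) * (2 * lam * Complex.I))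
  have hE : ∀ x, ‖E x‖ = 1 := by
    intro x
    have : (prim a ρ x : ℂ) * (2 * lam * Complex.I) = ((prim a ρ x * (2 * lam) : ℝ) : ℂ) * Complex.I := by
      push_cast; ring
    simp only [E, this, Complex.norm_exp_ofReal_mul_I]
  have hEe : ∀ x, ph a ρ s lam x * ph a ρ s lam x = e x * E x := by
    intro x
    simp only [ph, e, E, ← Complex.exp_add]
    congr 1
    push_cast; ring
  let w : ℝ → ℂ := fun x => ph a ρ s lam x * z x
  let w' : ℝ → ℂ := fun x => ph a ρ s lam x * (m x * conj (z x))
  have hw : ∀ x ∈ Icc a b, HasDerivWithinAt w (w' x) (Icc a b) x := fun x hx => D.w_deriv hz hx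
  have hw2 : ∀ x, w' x = m x * (e x * E x) * conj (w x) := by
    intro x
    simp only [w', w, ← hEe, map_mul]
    linear_combination (-(ph a ρ s lam x * m x * conj (z x))) * ph_conj a ρ s lam x
  have hwn : ∀ x, ‖w x‖ = ‖z x‖ := by intro x; simp [w, ph_norm]
  have hw'n : ∀ x ∈ Icc a b, ‖w' x‖ ≤ B * ‖z x‖ := by
    intro x hx
    simp only [w', norm_mul, ph_norm, one_mul, RCLike.norm_conj]
    gcongr
    exact (h x hx).2.2
  let H : ℝ → ℂ := fun x => (lam : ℂ) * w x - Q x * E x * conj (w x) * (1 / (2 * Complex.I))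
  let H' : ℝ → ℂ := fun x => -(Q' x * conj (w x) + Q x * conj (w' x)) * E x * (1 / (2 * Complex.I))
  have hH : ∀ x ∈ Icc a b, HasDerivWithinAt H (H' x) (Icc a b) x := by
    intro x hx
    have h1 : HasDerivWithinAt E (E x * ((ρ x : ℂ) * (2 * lam * Complex.I))) (Icc a b) x :=
      (((prim_hasDeriv D.hab.le D.hρ.continuousOn hx).ofReal_comp).mul_const _).cexp
    have h2 : HasDerivWithinAt (fun x => conj (w x)) (conj (w' x)) (Icc a b) x := (hw x hx).star
    have h3 := ((hw x hx).const_mul (lam : ℂ)).sub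
      ((((hQd x hx).mul h1).mul h2).mul_const (1 / (2 * Complex.I)))
    refine h3.congr_deriv ?_
    have hI : Complex.I ≠ 0 := Complex.I_ne_zero
    have hr : (ρ x : ℂ) ≠ 0 := by exact_mod_cast hne x hx
    simp only [H', hw2, Q, Pi.mul_apply]
    push_cast
    field_simp
    ring
  have hH'b : ∀ x ∈ Icc a b, ‖H' x‖ ≤ (B2 + B1 * B) * G / 2 * ‖z a‖ := by
    intro x hx
    simp only [H', norm_mul, norm_neg, hE, mul_one, norm_div, norm_one, Complex.norm_I, Complex.norm_ofNat]
    have : ‖Q' x * conj (w x) + Q x * conj (w' x)‖ ≤ (B2 + B1 * B) * (G * ‖z a‖) := by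
      refine (norm_add_le _ _).trans ?_
      simp only [norm_mul, RCLike.norm_conj]
      have h1 : ‖Q' x‖ * ‖w x‖ ≤ B2 * (G * ‖z a‖) := by
        rw [hwn]; gcongr
        · exact hQ'b x hx
        · exact hzb x hx
      have h2 : ‖Q x‖ * ‖w' x‖ ≤ B1 * (B * (G * ‖z a‖)) := by
        gcongr
        · exact hQb x hx
        · refine (hw'n x hx).trans ?_
          gcongr; exact hzb x hx
      linarith
    linarith
  have hmv := (convex_Icc a b).norm_image_sub_le_of_norm_hasDerivWithin_le hH hH'b hy hx
  have hxy : ‖x - y‖ ≤ b - a := by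
    rw [Real.norm_eq_abs, abs_le]; constructor <;> linarith [hx.1, hx.2, hy.1, hy.2]
  have hRb : ∀ x ∈ Icc a b, ‖Q x * E x * conj (w x) * (1 / (2 * Complex.I))‖ ≤ B1 * G * ‖z a‖ / 2 := by
    intro x hx
    simp only [norm_mul, hE, mul_one, norm_div, norm_one, Complex.norm_I, Complex.norm_ofNat, RCLike.norm_conj, hwn]
    have : ‖Q x‖ * ‖z x‖ ≤ B1 * (G * ‖z a‖) := by
      gcongr
      · exact hQb x hx
      · exact hzb x hx
    linarith
  have e3 : (lam : ℂ) * (w x - w y) = (H x - H y) + Q x * E x * conj (w x) * (1 / (2 * Complex.I))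
      - Q y * E y * conj (w y) * (1 / (2 * Complex.I)) := by simp only [H]; ring
  have e4 : |lam| * ‖w x - w y‖ = ‖(lam : ℂ) * (w x - w y)‖ := by
    rw [norm_mul, Complex.norm_real, Real.norm_eq_abs]
  change |lam| * ‖w x - w y‖ ≤ _
  rw [e4, e3]
  refine (norm_sub_le _ _).trans ?_
  have h5 := norm_add_le (H x - H y) (Q x * E x * conj (w x) * (1 / (2 * Complex.I)))
  have h6 : (B2 + B1 * B) * G / 2 * ‖z a‖ * ‖x - y‖ ≤ (B2 + B1 * B) * G / 2 * ‖z a‖ * (b - a) := by gcongr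
  have := hRb x hx
  have := hRb y hy
  have : 0 ≤ G * ‖z a‖ := by positivity
  nlinarith

end D
end DiracExp

end

noncomputable section
open Set Filter Topology MeasureTheory ComplexConjugate
namespace DiracExp

lemma ii_of_cont {a b : ℝ} (hab : a ≤ b) {E : Type*} [NormedAddCommGroup E] {φ : ℝ → E}
    (h : ContinuousOn φ (Icc a b)) : IntervalIntegrable φ volume a b :=
  ContinuousOn.intervalIntegrable (by rwa [uIcc_of_le hab])

section D
variable {a b : ℝ} {ρ s : ℝ → ℝ} {m : ℝ → ℂ} (D : DData a b ρ s m)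
include D

lemma DData.Xi_pos : 0 < prim a ρ b := by
  unfold prim
  apply intervalIntegral.intervalIntegral_pos_of_pos_on (ii_of_cont D.hab.le D.hρ.continuousOn) _ D.hab
  intro x hx; exact D.hpos x (Ioo_subset_Icc_self hx)

lemma DData.norm_int {lam : ℝ} {z : ℝ → ℂ} (hz : IsSol a b ρ s m lam z) :
    IntervalIntegrable (fun x => ρ x * ‖z x‖ ^ 2) volume a b :=
  ii_of_cont D.hab.le (D.hρ.continuousOn.mul (hz.continuousOn.norm.pow 2))

lemma DData.normalized : ∃ K : ℝ, 0 < K ∧ ∃ L : ℝ, 0 < L ∧ ∀ lam z, IsSol a b ρ s m lam z →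
    (∫ x in a..b, ρ x * ‖z x‖ ^ 2) = 1 → L ≤ |lam| →
    (∀ x ∈ Icc a b, ‖z x‖ ≤ K) ∧
    (∀ x ∈ Icc a b, ∀ y ∈ Icc a b,
      |lam| * ‖ph a ρ s lam x * z x - ph a ρ s lam y * z y‖ ≤ K) ∧
    (∀ e ∈ Icc a b, |lam| * |‖z e‖ ^ 2 - 1 / prim a ρ b| ≤ K) := by
  obtain ⟨K0, hK0, h⟩ := D.bounds
  have hX := D.Xi_pos
  set X := prim a ρ b with hXdef
  set A0 := 1 + 4 / X with hA0
  have hA0p : 0 < A0 := by positivity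
  set K1 := K0 * A0 with hK1
  have hK1p : 0 < K1 := by positivity
  refine ⟨K1 + 2 * K1 * K1, by positivity, 2 * K0, by positivity, ?_⟩
  intro lam z hz hn hl
  obtain ⟨hb, hw⟩ := h lam z hz
  have hlp : 0 < |lam| := by linarith
  have haI : a ∈ Icc a b := ⟨le_rfl, D.hab.le⟩
  set A := ‖z a‖ with hA
  have hA00 : 0 ≤ A := norm_nonneg _
  have hlow : ∀ x ∈ Icc a b, A / 2 ≤ ‖z x‖ := by
    intro x hx
    have h1 := hw x hx a haI
    have h2 : ‖ph a ρ s lam a * z a‖ ≤ ‖ph a ρ s lam x * z x‖ + ‖ph a ρ s lam x * z x - ph a ρ s lam a * z a‖ := by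
      have := norm_sub_norm_le (ph a ρ s lam a * z a) (ph a ρ s lam x * z x)
      rw [norm_sub_rev] at this; linarith
    simp only [norm_mul, ph_norm, one_mul] at h2
    set d := ‖ph a ρ s lam x * z x - ph a ρ s lam a * z a‖
    have hd : 0 ≤ d := norm_nonneg _
    have : 2 * K0 * d ≤ K0 * A := by nlinarith
    have : d ≤ A / 2 := by nlinarith
    linarith
  have hAsq : X * (A / 2) ^ 2 ≤ 1 := by
    rw [← hn, hXdef, prim, ← intervalIntegral.integral_mul_const]
    apply intervalIntegral.integral_mono_on D.hab.le
      ((ii_of_cont D.hab.le D.hρ.continuousOn).mul_const _) (D.norm_int hz)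
    intro x hx
    have := hlow x hx
    have := (D.hpos x hx).le
    gcongr
  have hAle : A ≤ A0 := by
    have : A ^ 2 ≤ 4 / X := by rw [le_div_iff₀ hX]; nlinarith
    rw [hA0]; nlinarith [sq_nonneg (A - 1)]
  have hb' : ∀ x ∈ Icc a b, ‖z x‖ ≤ K1 := fun x hx =>
    (hb x hx).trans (by rw [hK1]; gcongr)
  have hw' : ∀ x ∈ Icc a b, ∀ y ∈ Icc a b,
      |lam| * ‖ph a ρ s lam x * z x - ph a ρ s lam y * z y‖ ≤ K1 := fun x hx y hy =>
    (hw x hx y hy).trans (by rw [hK1]; gcongr)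
  have hKK : 0 < 2 * K1 * K1 := by positivity
  refine ⟨fun x hx => (hb' x hx).trans (by linarith), fun x hx y hy => (hw' x hx y hy).trans (by linarith), ?_⟩
  intro e he
  have hdiff : ∀ x ∈ Icc a b, |‖z x‖ ^ 2 - ‖z e‖ ^ 2| ≤ 2 * K1 * K1 / |lam| := by
    intro x hx
    have h1 := hw' x hx e he
    have h2 := abs_norm_sub_norm_le (ph a ρ s lam x * z x) (ph a ρ s lam e * z e)
    simp only [norm_mul, ph_norm, one_mul] at h2
    rw [le_div_iff₀ hlp, sq_sub_sq, abs_mul, abs_of_nonneg (by positivity : 0 ≤ ‖z x‖ + ‖z e‖)]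
    have h3 : |‖z x‖ - ‖z e‖| * |lam| ≤ K1 := by
      refine le_trans ?_ h1
      rw [mul_comm]; gcongr
    have h4 : ‖z x‖ + ‖z e‖ ≤ 2 * K1 := by linarith [hb' x hx, hb' e he]
    rw [mul_assoc]
    gcongr
  have hInt0 : 1 - X * ‖z e‖ ^ 2 = ∫ x in a..b, ρ x * (‖z x‖ ^ 2 - ‖z e‖ ^ 2) := by
    simp only [mul_sub]
    rw [intervalIntegral.integral_sub (D.norm_int hz)
      ((ii_of_cont D.hab.le D.hρ.continuousOn).mul_const _), hn, intervalIntegral.integral_mul_const]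
    rfl
  have hi2 : |1 - X * ‖z e‖ ^ 2| ≤ X * (2 * K1 * K1 / |lam|) := by
    rw [hInt0, hXdef, prim, ← intervalIntegral.integral_mul_const, ← Real.norm_eq_abs]
    apply intervalIntegral.norm_integral_le_of_norm_le D.hab.le _
      ((ii_of_cont D.hab.le D.hρ.continuousOn).mul_const _)
    refine Eventually.of_forall fun x hx => ?_
    have hx := Ioc_subset_Icc_self hx
    rw [Real.norm_eq_abs, abs_mul, abs_of_pos (D.hpos x hx)]
    have := (D.hpos x hx).le
    gcongr
    exact hdiff x hx
  have e1 : ‖z e‖ ^ 2 - 1 / X = -(1 - X * ‖z e‖ ^ 2) / X := by field_simp; ring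
  rw [e1, abs_div, abs_neg, abs_of_pos hX]
  have : |1 - X * ‖z e‖ ^ 2| / X ≤ 2 * K1 * K1 / |lam| := by
    rw [div_le_iff₀ hX]; linarith [hi2]
  calc |lam| * (|1 - X * ‖z e‖ ^ 2| / X) ≤ |lam| * (2 * K1 * K1 / |lam|) := by gcongr
    _ = 2 * K1 * K1 := by field_simp
    _ ≤ _ := by linarith

lemma DData.sin_close (α β : ℝ) : ∃ K : ℝ, 0 < K ∧ ∀ lam z (κ : ℝ), IsSol a b ρ s m lam z →
    z a = κ * (Complex.I * Complex.exp (α * Complex.I)) →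
    |lam| * |((z b).re * Real.cos β + (z b).im * Real.sin β)
      - κ * Real.sin (lam * prim a ρ b - (prim a s b + α - β))| ≤ K * |κ| := by
  obtain ⟨K, hK, h⟩ := D.bounds
  refine ⟨K, hK, fun lam z κ hz hza => ?_⟩
  have hb := (h lam z hz).2 b ⟨D.hab.le, le_rfl⟩ a ⟨le_rfl, D.hab.le⟩
  have hna : ‖z a‖ = |κ| := by
    rw [hza]; simp [Complex.norm_exp_ofReal_mul_I]
  rw [hna, ph_self, one_mul] at hb
  refine le_trans ?_ hb
  gcongr
  set u := Complex.exp (((-(lam * prim a ρ b - prim a s b + β) : ℝ) : ℂ) * Complex.I) with hu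
  have hun : ‖u‖ = 1 := Complex.norm_exp_ofReal_mul_I _
  have e1 : ((z b).re * Real.cos β + (z b).im * Real.sin β)
      - κ * Real.sin (lam * prim a ρ b - (prim a s b + α - β))
      = (u * (ph a ρ s lam b * z b - z a)).re := by
    have h1 : u * (ph a ρ s lam b * z b) = Complex.exp (((-β : ℝ) : ℂ) * Complex.I) * z b := by
      rw [← mul_assoc, hu, ph, ← Complex.exp_add]; congr 2; push_cast; ring
    have h2 : u * z a = κ * (Complex.I * Complex.exp (((-(lam * prim a ρ b - (prim a s b + α - β)) : ℝ) : ℂ) * Complex.I)) := by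
      rw [hza, hu]
      have : Complex.exp (((-(lam * prim a ρ b - (prim a s b + α - β)) : ℝ) : ℂ) * Complex.I)
        = Complex.exp (((-(lam * prim a ρ b - prim a s b + β) : ℝ) : ℂ) * Complex.I) * Complex.exp (α * Complex.I) := by
        rw [← Complex.exp_add]; congr 1; push_cast; ring
      rw [this]; ring
    rw [mul_sub, h1, h2]
    simp only [Complex.sub_re, Complex.mul_re, Complex.mul_im, Complex.exp_ofReal_mul_I_re,
      Complex.exp_ofReal_mul_I_im, Complex.I_re, Complex.I_im, Complex.ofReal_re, Complex.ofReal_im,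
      Real.sin_neg, Real.cos_neg]
    ring
  rw [e1]
  refine (Complex.abs_re_le_norm _).trans ?_
  rw [norm_mul, hun, one_mul]

end D

/-- boundary form -/
def bc (α : ℝ) (z : ℂ) : ℝ := z.re * Real.cos α + z.im * Real.sin α

lemma bc_repr {α : ℝ} {z : ℂ} (h : bc α z = 0) :
    ∃ κ : ℝ, z = κ * (Complex.I * Complex.exp (α * Complex.I)) := by
  refine ⟨z.im * Real.cos α - z.re * Real.sin α, ?_⟩
  unfold bc at h
  have := Real.sin_sq_add_cos_sq α
  apply Complex.ext
  · simp only [Complex.mul_re, Complex.mul_im, Complex.exp_ofReal_mul_I_re,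
      Complex.exp_ofReal_mul_I_im, Complex.I_re, Complex.I_im, Complex.ofReal_re, Complex.ofReal_im]
    linear_combination (-z.re) * this + Real.cos α * h
  · simp only [Complex.mul_re, Complex.mul_im, Complex.exp_ofReal_mul_I_re,
      Complex.exp_ofReal_mul_I_im, Complex.I_re, Complex.I_im, Complex.ofReal_re, Complex.ofReal_im]
    linear_combination (-z.im) * this + Real.sin α * h

lemma bc_of_repr (α κ : ℝ) : bc α (κ * (Complex.I * Complex.exp (α * Complex.I))) = 0 := by
  unfold bc
  simp only [Complex.mul_re, Complex.mul_im, Complex.exp_ofReal_mul_I_re,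
      Complex.exp_ofReal_mul_I_im, Complex.I_re, Complex.I_im, Complex.ofReal_re, Complex.ofReal_im]
  ring

/-- one-sided list of eigenvalues -/
structure Half (a b : ℝ) (ρ s : ℝ → ℝ) (m : ℝ → ℂ) (α β : ℝ) (lam : ℕ → ℝ) (z : ℕ → ℝ → ℂ) : Prop where
  sol : ∀ n, IsSol a b ρ s m (lam n) (z n)
  bca : ∀ n, bc α (z n a) = 0
  bcb : ∀ n, bc β (z n b) = 0
  mono : Monotone lam
  top : Tendsto lam atTop atTop
  orth : ∀ k n, (∫ x in a..b, ρ x * (conj (z k x) * z n x).re) = if k = n then 1 else 0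
  compl : ∀ μ w, lam 0 < μ → IsSol a b ρ s m μ w → w a ≠ 0 → bc α (w a) = 0 → bc β (w b) = 0 → ∃ n, lam n = μ

section H
variable {a b : ℝ} {ρ s : ℝ → ℝ} {m : ℝ → ℂ} (D : DData a b ρ s m)
  {α β : ℝ} {lam : ℕ → ℝ} {z : ℕ → ℝ → ℂ} (H : Half a b ρ s m α β lam z)
include D H

omit D in
lemma Half.nrm (n : ℕ) : (∫ x in a..b, ρ x * ‖z n x‖ ^ 2) = 1 := by
  have := H.orth n n
  rw [if_pos rfl] at this
  rw [← this]
  congr 1; ext x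
  rw [← Complex.normSq_eq_norm_sq, mul_comm (conj _), Complex.mul_conj]
  simp

lemma Half.za_ne (n : ℕ) : z n a ≠ 0 := by
  intro h
  obtain ⟨K, hK, hb⟩ := D.bounds
  have h1 := (hb _ _ (H.sol n)).1
  have h2 := H.nrm n
  rw [intervalIntegral.integral_congr (g := fun _ => 0)] at h2
  · simp at h2
  · intro x hx
    rw [uIcc_of_le D.hab.le] at hx
    have := h1 x hx
    rw [h, norm_zero, mul_zero] at this
    have : ‖z n x‖ = 0 := le_antisymm this (norm_nonneg _)
    simp [this]

/-- phase index -/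
def kk (a b : ℝ) (ρ s : ℝ → ℝ) (α β : ℝ) (lam : ℝ) : ℤ :=
  ⌊(lam * prim a ρ b - (prim a s b + α - β)) / Real.pi + 1 / 2⌋

lemma Half.near : ∃ K : ℝ, 0 < K ∧ ∀ n,
    |lam n| * |lam n * prim a ρ b - (prim a s b + α - β) - kk a b ρ s α β (lam n) * Real.pi| ≤ K := by
  obtain ⟨K, hK, h⟩ := D.sin_close α β
  refine ⟨K * (Real.pi / 2), by positivity, fun n => ?_⟩
  obtain ⟨κ, hκ⟩ := bc_repr (H.bca n)
  have hκ0 : κ ≠ 0 := by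
    rintro rfl; exact H.za_ne D n (by rw [hκ]; simp)
  have h1 := h _ _ κ (H.sol n) hκ
  have h2 := H.bcb n
  unfold bc at h2
  rw [h2, zero_sub, abs_neg, abs_mul] at h1
  have h3 : |lam n| * |Real.sin (lam n * prim a ρ b - (prim a s b + α - β))| ≤ K := by
    have := abs_pos.2 hκ0
    by_contra hc
    push Not at hc
    nlinarith
  set θ := lam n * prim a ρ b - (prim a s b + α - β) with hθ
  set k := kk a b ρ s α β (lam n) with hk
  have hk1 : (k : ℝ) ≤ θ / Real.pi + 1 / 2 := Int.floor_le _
  have hk2 : θ / Real.pi + 1 / 2 < k + 1 := Int.lt_floor_add_one _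
  have hpi := Real.pi_pos
  have hab : |θ - k * Real.pi| ≤ Real.pi / 2 := by
    have e : θ = (θ / Real.pi) * Real.pi := by field_simp
    rw [abs_le]; constructor <;> nlinarith
  have h4 := Real.mul_abs_le_abs_sin hab
  have h5 : |Real.sin (θ - k * Real.pi)| = |Real.sin θ| := by
    rw [Real.sin_sub_int_mul_pi, abs_mul, abs_zpow]; simp
  rw [h5] at h4
  calc |lam n| * |θ - k * Real.pi| = (|lam n| * (2 / Real.pi * |θ - k * Real.pi|)) * (Real.pi / 2) := by
        field_simp
    _ ≤ (|lam n| * |Real.sin θ|) * (Real.pi / 2) := by gcongr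
    _ ≤ _ := by gcongr

end H
end DiracExp

end

noncomputable section
open Set Filter Topology MeasureTheory ComplexConjugate
namespace DiracExp

section H
variable {a b : ℝ} {ρ s : ℝ → ℝ} {m : ℝ → ℂ} (D : DData a b ρ s m)
  {α β : ℝ} {lam : ℕ → ℝ} {z : ℕ → ℝ → ℂ} (H : Half a b ρ s m α β lam z)

include D in
lemma DData.prim_le {x : ℝ} (hx : x ∈ Icc a b) : 0 ≤ prim a ρ x ∧ prim a ρ x ≤ prim a ρ b := by
  have h1 : ∀ y ∈ Icc a b, ∀ x ∈ Icc a b, y ≤ x → prim a ρ y ≤ prim a ρ x := by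
    have : MonotoneOn (prim a ρ) (Icc a b) := by
      apply monotoneOn_of_deriv_nonneg (convex_Icc a b) (prim_cont D.hab.le D.hρ.continuousOn)
      · intro x hx
        rw [interior_Icc] at hx
        exact ((prim_hasDeriv D.hab.le D.hρ.continuousOn (Ioo_subset_Icc_self hx)).hasDerivAt
          (Icc_mem_nhds hx.1 hx.2)).differentiableAt.differentiableWithinAt
      · intro x hx
        rw [interior_Icc] at hx
        rw [((prim_hasDeriv D.hab.le D.hρ.continuousOn (Ioo_subset_Icc_self hx)).hasDerivAt
          (Icc_mem_nhds hx.1 hx.2)).deriv]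
        exact (D.hpos x (Ioo_subset_Icc_self hx)).le
    exact fun y hy x hx h => this hy hx h
  have h2 := h1 a ⟨le_rfl, D.hab.le⟩ x hx hx.1
  rw [prim_self] at h2
  exact ⟨h2, h1 x hx b ⟨D.hab.le, le_rfl⟩ hx.2⟩

lemma kk_mono (a b : ℝ) (ρ s : ℝ → ℝ) (α β : ℝ) (h : 0 ≤ prim a ρ b) : Monotone (kk a b ρ s α β) := by
  intro x y hxy
  unfold kk
  apply Int.floor_mono
  have := Real.pi_pos
  gcongr

include D H

lemma Half.sep : ∀ᶠ n in atTop, kk a b ρ s α β (lam n) ≠ kk a b ρ s α β (lam (n + 1)) := by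
  obtain ⟨K, hK, L, hL, hN⟩ := D.normalized
  obtain ⟨K2, hK2, hnear⟩ := H.near D
  have hX := D.Xi_pos
  set X := prim a ρ b with hXd
  -- a large threshold
  have hlarge : ∀ᶠ n in atTop, max L (max (2 * X * K) (4 * X * (2 * K2 * K * K + 2 * K * K))) < lam n :=
    H.top.eventually (eventually_gt_atTop _)
  filter_upwards [hlarge] with n hn hk
  simp only [max_lt_iff] at hn
  obtain ⟨hn1, hn2, hn3⟩ := hn
  set l := lam n with hl
  set l' := lam (n + 1) with hl'
  have hll : l ≤ l' := H.mono (Nat.le_succ n)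
  have hlp : 0 < l := by linarith
  have hlp' : 0 < l' := by linarith
  obtain ⟨b1, b2, b3⟩ := hN _ _ (H.sol n) (H.nrm n) (by rw [abs_of_pos hlp]; exact hn1.le)
  obtain ⟨c1, c2, c3⟩ := hN _ _ (H.sol (n + 1)) (H.nrm (n + 1)) (by rw [abs_of_pos hlp']; linarith)
  have n1 := hnear n
  have n2 := hnear (n + 1)
  rw [← hl] at b2 b3 n1
  rw [← hl'] at c2 c3 n2
  rw [← hk] at n2
  rw [abs_of_pos hlp] at n1 b2 b3
  rw [abs_of_pos hlp'] at n2 c2 c3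
  -- closeness of the eigenvalues
  have hdl : l * (|l' - l| * X) ≤ 2 * K2 := by
    have e : (l' - l) * X = (l' * X - (prim a s b + α - β) - kk a b ρ s α β l * Real.pi)
      - (l * X - (prim a s b + α - β) - kk a b ρ s α β l * Real.pi) := by ring
    rw [← abs_of_pos hX, ← abs_mul, e]
    have := abs_sub (l' * X - (prim a s b + α - β) - kk a b ρ s α β l * Real.pi)
      (l * X - (prim a s b + α - β) - kk a b ρ s α β l * Real.pi)
    have h3 : l * |l' * X - (prim a s b + α - β) - kk a b ρ s α β l * Real.pi| ≤ K2 := by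
      refine le_trans ?_ n2; gcongr
    nlinarith
  have haI : a ∈ Icc a b := ⟨le_rfl, D.hab.le⟩
  set P0 := conj (z n a) * z (n + 1) a with hP0
  have hpt : ∀ x ∈ Icc a b, l * ‖conj (z n x) * z (n + 1) x - P0‖ ≤ 2 * K2 * K * K + 2 * K * K := by
    intro x hx
    set w := ph a ρ s l x * z n x with hw
    set w' := ph a ρ s l' x * z (n + 1) x with hw'
    have hwa := b2 x hx a haI
    have hwa' := c2 x hx a haI
    rw [ph_self, one_mul] at hwa hwa'
    set u := ph a ρ s l x * conj (ph a ρ s l' x) with hu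
    have hun : ‖u‖ = 1 := by rw [hu, norm_mul, RCLike.norm_conj, ph_norm, ph_norm, mul_one]
    have e1 : conj (z n x) * z (n + 1) x = u * (conj w * w') := by
      rw [hu, hw, hw', map_mul]
      linear_combination (-(conj (z n x) * z (n + 1) x)) * ph_conj a ρ s l x
        + (-(conj (z n x) * z (n + 1) x)) * (ph a ρ s l x * conj (ph a ρ s l x)) * ph_conj a ρ s l' x
    have hu1 : ‖u - 1‖ ≤ |l' - l| * X := by
      have : u = Complex.exp (Complex.I * (((l - l') * prim a ρ x : ℝ) : ℂ)) := by
        rw [hu, ph, ph, ← Complex.exp_conj, ← Complex.exp_add]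
        congr 1
        simp
        ring
      rw [this]
      refine (Real.norm_exp_I_mul_ofReal_sub_one_le).trans ?_
      rw [Real.norm_eq_abs, abs_mul, abs_sub_comm, abs_of_nonneg (D.prim_le hx).1]
      gcongr
      exact (D.prim_le hx).2
    have e2 : conj (z n x) * z (n + 1) x - P0 = (u - 1) * (conj w * w')
        + (conj (w - z n a) * w' + conj (z n a) * (w' - z (n + 1) a)) := by
      rw [e1, hP0, map_sub]; ring
    have hwn : ‖w‖ ≤ K := by rw [hw, norm_mul, ph_norm, one_mul]; exact b1 x hx
    have hwn' : ‖w'‖ ≤ K := by rw [hw', norm_mul, ph_norm, one_mul]; exact c1 x hx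
    have hza := b1 a haI
    rw [e2]
    have t1 : ‖(u - 1) * (conj w * w')‖ ≤ (|l' - l| * X) * (K * K) := by
      rw [norm_mul, norm_mul, RCLike.norm_conj]; gcongr
    have t2 : ‖conj (w - z n a) * w'‖ ≤ ‖w - z n a‖ * K := by
      rw [norm_mul, RCLike.norm_conj]; gcongr
    have t3 : ‖conj (z n a) * (w' - z (n + 1) a)‖ ≤ K * ‖w' - z (n + 1) a‖ := by
      rw [norm_mul, RCLike.norm_conj]; gcongr
    have t4 := norm_add_le ((u - 1) * (conj w * w')) (conj (w - z n a) * w' + conj (z n a) * (w' - z (n + 1) a))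
    have t5 := norm_add_le (conj (w - z n a) * w') (conj (z n a) * (w' - z (n + 1) a))
    have t6 : l * ‖w' - z (n + 1) a‖ ≤ K := by refine le_trans ?_ hwa'; gcongr
    calc l * _ ≤ l * ((|l' - l| * X) * (K * K) + (‖w - z n a‖ * K + K * ‖w' - z (n + 1) a‖)) := by
          gcongr; linarith
      _ = (l * (|l' - l| * X)) * (K * K) + ((l * ‖w - z n a‖) * K + K * (l * ‖w' - z (n + 1) a‖)) := by ring
      _ ≤ 2 * K2 * (K * K) + (K * K + K * K) := by gcongr
      _ = _ := by ring
  set M := 2 * K2 * K * K + 2 * K * K with hM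
  have hMp : 0 < M := by positivity
  have horth := H.orth n (n + 1)
  rw [if_neg (by omega)] at horth
  have hci : ContinuousOn (fun x => ρ x * (conj (z n x) * z (n + 1) x).re) (Icc a b) := by
    have h1 := (H.sol n).continuousOn
    have h2 := (H.sol (n + 1)).continuousOn
    have h3 := D.hρ.continuousOn
    have h4 : ContinuousOn (fun x => conj (z n x) * z (n + 1) x) (Icc a b) :=
      (Complex.continuous_conj.comp_continuousOn h1).mul h2
    exact h3.mul (Complex.continuous_re.comp_continuousOn h4)
  have hInt0 : -(X * P0.re) = ∫ x in a..b, ρ x * ((conj (z n x) * z (n + 1) x - P0)).re := by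
    simp only [Complex.sub_re, mul_sub]
    rw [intervalIntegral.integral_sub (ii_of_cont D.hab.le hci)
      ((ii_of_cont D.hab.le D.hρ.continuousOn).mul_const _), horth, intervalIntegral.integral_mul_const]
    rw [zero_sub]; rfl
  have hi2 : |-(X * P0.re)| ≤ X * (M / l) := by
    rw [hInt0, hXd, prim, ← intervalIntegral.integral_mul_const, ← Real.norm_eq_abs]
    apply intervalIntegral.norm_integral_le_of_norm_le D.hab.le _
      ((ii_of_cont D.hab.le D.hρ.continuousOn).mul_const _)
    refine Eventually.of_forall fun x hx => ?_
    have hx := Ioc_subset_Icc_self hx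
    rw [Real.norm_eq_abs, abs_mul, abs_of_pos (D.hpos x hx)]
    have := (D.hpos x hx).le
    gcongr
    refine (Complex.abs_re_le_norm _).trans ?_
    rw [le_div_iff₀ hlp, mul_comm]; exact hpt x hx
  have hP : |P0.re| * l ≤ M := by
    rw [abs_neg, abs_mul, abs_of_pos hX] at hi2
    have := le_of_mul_le_mul_left hi2 hX
    rwa [le_div_iff₀ hlp] at this
  -- lower bound
  obtain ⟨κ, hκ⟩ := bc_repr (H.bca n)
  obtain ⟨κ', hκ'⟩ := bc_repr (H.bca (n + 1))
  have e3 : P0.re = κ * κ' := by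
    rw [hP0, hκ, hκ']
    simp only [map_mul, ← Complex.exp_conj]
    have : Complex.exp (conj ((α : ℂ) * Complex.I)) * Complex.exp ((α : ℂ) * Complex.I) = 1 := by
      rw [← Complex.exp_add]; simp
    have : conj (κ : ℂ) * (conj Complex.I * Complex.exp (conj (↑α) * conj Complex.I)) *
      (↑κ' * (Complex.I * Complex.exp (↑α * Complex.I))) = ((κ * κ' : ℝ) : ℂ) := by
      rw [map_mul] at this
      simp only [Complex.conj_ofReal, Complex.conj_I] at this ⊢
      push_cast
      linear_combination (κ * κ' : ℂ) * this - (κ * κ' : ℂ) * (Complex.exp (↑α * -Complex.I) * Complex.exp (↑α * Complex.I)) * Complex.I_mul_I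
    rw [this, Complex.ofReal_re]
  have hn2' : ‖z n a‖ = |κ| := by rw [hκ]; simp [Complex.norm_exp_ofReal_mul_I]
  have hn3' : ‖z (n + 1) a‖ = |κ'| := by rw [hκ']; simp [Complex.norm_exp_ofReal_mul_I]
  have q1 := b3 a haI
  have q2 := c3 a haI
  rw [hn2', sq_abs] at q1
  rw [hn3', sq_abs] at q2
  have q3 : 1 / (2 * X) ≤ κ ^ 2 := by
    have h1 : |κ ^ 2 - 1 / X| ≤ 1 / (2 * X) := by
      rw [le_div_iff₀ (by positivity)]
      by_contra hc; push Not at hc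
      have : 0 ≤ |κ ^ 2 - 1 / X| := abs_nonneg _
      have h5 : l * |κ ^ 2 - 1 / X| * (2 * X) ≤ K * (2 * X) := by gcongr
      nlinarith
    have e5 : 1 / X = 1 / (2 * X) + 1 / (2 * X) := by field_simp; norm_num
    linarith [(abs_le.1 h1).1]
  have q4 : 1 / (2 * X) ≤ κ' ^ 2 := by
    have h1 : |κ' ^ 2 - 1 / X| ≤ 1 / (2 * X) := by
      rw [le_div_iff₀ (by positivity)]
      by_contra hc; push Not at hc
      have : 0 ≤ |κ' ^ 2 - 1 / X| := abs_nonneg _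
      have h5 : l' * |κ' ^ 2 - 1 / X| * (2 * X) ≤ K * (2 * X) := by gcongr
      nlinarith
    have e5 : 1 / X = 1 / (2 * X) + 1 / (2 * X) := by field_simp; norm_num
    linarith [(abs_le.1 h1).1]
  have q5 : 1 / (2 * X) ≤ |P0.re| := by
    apply le_of_sq_le_sq _ (abs_nonneg _)
    rw [sq_abs, e3, mul_pow, sq]
    gcongr
  have q6 : 1 / (2 * X) * l ≤ M := le_trans (by gcongr) hP
  have q7 : 1 / (2 * X) * (4 * X * M) ≤ M := le_trans (by gcongr) q6
  have q8 : 1 / (2 * X) * (4 * X * M) = 2 * M := by field_simp; norm_num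
  linarith

end H
end DiracExp

end

noncomputable section
open Set Filter Topology MeasureTheory ComplexConjugate
namespace DiracExp

section H
variable {a b : ℝ} {ρ s : ℝ → ℝ} {m : ℝ → ℂ} (D : DData a b ρ s m)
  {α β : ℝ} {lam : ℕ → ℝ} {z : ℕ → ℝ → ℂ} (H : Half a b ρ s m α β lam z)

lemma bc_sub (β : ℝ) (u v : ℂ) : |bc β u - bc β v| ≤ 2 * ‖u - v‖ := by
  unfold bc
  have h1 := Complex.abs_re_le_norm (u - v)
  have h2 := Complex.abs_im_le_norm (u - v)
  have e : u.re * Real.cos β + u.im * Real.sin β - (v.re * Real.cos β + v.im * Real.sin β)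
    = (u - v).re * Real.cos β + (u - v).im * Real.sin β := by simp; ring
  rw [e]
  refine (abs_add_le _ _).trans ?_
  rw [abs_mul, abs_mul]
  have := Real.abs_cos_le_one β
  have := Real.abs_sin_le_one β
  nlinarith [abs_nonneg (u - v).re, abs_nonneg (u - v).im]

include D in
/-- every large index is attained -/
lemma DData.nogap (α β : ℝ) : ∃ k1 : ℤ, ∀ k : ℤ, k1 ≤ k → ∃ μ w, IsSol a b ρ s m μ w ∧ w a ≠ 0 ∧
    bc α (w a) = 0 ∧ bc β (w b) = 0 ∧ kk a b ρ s α β μ = k := by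
  obtain ⟨K, hK, h⟩ := D.sin_close α β
  have hX := D.Xi_pos
  have hpi := Real.pi_pos
  set X := prim a ρ b with hXd
  set c := prim a s b + α - β with hc
  choose Z hZa hZs using fun l => D.exists_sol l (Complex.I * Complex.exp (α * Complex.I))
  let Δ : ℝ → ℝ := fun l => bc β (Z l b)
  have hΔc : Continuous Δ := by
    rw [continuous_iff_continuousAt]
    intro l0
    obtain ⟨K', hK', hd⟩ := D.cont_dep l0
    rw [Metric.continuousAt_iff]
    intro ε hε
    refine ⟨min 1 (ε / (2 * K' + 1)), by positivity, ?_⟩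
    intro l hl
    rw [Real.dist_eq, lt_min_iff] at hl
    have h1 := hd l (Z l) (Z l0) (hZs l) (hZs l0) (by rw [hZa, hZa]) hl.1.le
    have hn : ‖Z l a‖ = 1 := by rw [hZa]; simp [Complex.norm_exp_ofReal_mul_I]
    rw [hn, mul_one] at h1
    rw [Real.dist_eq]
    refine (bc_sub β _ _).trans_lt ?_
    have h2 := hl.2
    rw [lt_div_iff₀ (by positivity)] at h2
    have : 0 ≤ |l - l0| := abs_nonneg _
    nlinarith
  have hΔ : ∀ l, |l| * |Δ l - Real.sin (l * X - c)| ≤ K := by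
    intro l
    have := h l (Z l) 1 (hZs l) (by rw [hZa]; simp)
    simpa [Δ, bc] using this
  let L : ℤ → ℝ := fun k => (k * Real.pi - Real.pi / 2 + c) / X
  have hLX : ∀ k, L k * X - c = k * Real.pi - Real.pi / 2 := by
    intro k; simp only [L]; field_simp; ring
  have hLmono : ∀ k, L k < L (k + 1) := by
    intro k; simp only [L]; push_cast; gcongr; nlinarith
  have hLsin : ∀ k, Real.sin (L k * X - c) = -(-1) ^ k := by
    intro k
    rw [hLX, sub_eq_neg_add, Real.sin_add_int_mul_pi, Real.sin_neg, Real.sin_pi_div_two]; ring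
  refine ⟨⌈((K + 1) * X + Real.pi / 2 - c) / Real.pi⌉, fun k hk => ?_⟩
  have hLk : K + 1 ≤ L k := by
    have h1 := Int.ceil_le.1 hk
    rw [div_le_iff₀ hpi] at h1
    simp only [L]
    rw [le_div_iff₀ hX]; linarith
  have hcl : ∀ j, K + 1 ≤ L j → |Δ (L j) - -(-1) ^ j| < 1 := by
    intro j hj
    have h1 := hΔ (L j)
    rw [hLsin, abs_of_pos (by linarith)] at h1
    by_contra hcon; push Not at hcon
    nlinarith
  have h1 := hcl k hLk
  have h2 := hcl (k + 1) (hLk.trans (hLmono k).le)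
  rw [zpow_add_one₀ (by norm_num)] at h2
  have hroot : ∃ μ ∈ Ioo (L k) (L (k + 1)), Δ μ = 0 := by
    rcases Int.even_or_odd k with he | ho
    · rw [he.neg_one_zpow, abs_lt] at h1
      rw [he.neg_one_zpow, abs_lt] at h2
      exact intermediate_value_Ioo (hLmono k).le hΔc.continuousOn ⟨by linarith [h1.2], by linarith [h2.1]⟩
    · rw [ho.neg_one_zpow, abs_lt] at h1
      rw [ho.neg_one_zpow, abs_lt] at h2
      exact intermediate_value_Ioo' (hLmono k).le hΔc.continuousOn ⟨by linarith [h2.2], by linarith [h1.1]⟩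
  obtain ⟨μ, hμ, h0⟩ := hroot
  refine ⟨μ, Z μ, hZs μ, ?_, ?_, h0, ?_⟩
  · rw [hZa]; simp [Complex.exp_ne_zero]
  · rw [hZa]; simpa using bc_of_repr α 1
  · unfold kk
    rw [Int.floor_eq_iff]
    have g1 : L k * X < μ * X := by have := hμ.1; gcongr
    have g2 : μ * X < L (k + 1) * X := by have := hμ.2; gcongr
    have e1 := hLX k
    have e2 := hLX (k + 1)
    push_cast at e2
    rw [← hXd, ← hc]
    constructor
    · have : (k : ℝ) - 1 / 2 ≤ (μ * X - c) / Real.pi := by rw [le_div_iff₀ hpi]; nlinarith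
      linarith
    · have : (μ * X - c) / Real.pi < (k : ℝ) + 1 / 2 := by rw [div_lt_iff₀ hpi]; nlinarith
      linarith

include D H

lemma Half.asymp : ∃ r K : ℝ, 0 < K ∧ ∃ N0 : ℕ, ∀ n, N0 ≤ n → 
    |lam n - (Real.pi / prim a ρ b) * (n + r)| ≤ K / (n + 1) ∧ (n + 1 : ℝ) ≤ K * lam n ∧ 0 < lam n := by
  obtain ⟨K2, hK2, hnear⟩ := H.near D
  obtain ⟨k1, hk1⟩ := D.nogap α β
  have hX := D.Xi_pos
  have hpi := Real.pi_pos
  obtain ⟨n1, hn1⟩ := eventually_atTop.1 (H.sep D)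
  have hmono := kk_mono a b ρ s α β hX.le
  set X := prim a ρ b with hXd
  set c := prim a s b + α - β with hc
  let k : ℕ → ℤ := fun n => kk a b ρ s α β (lam n)
  have hkm : Monotone k := hmono.comp H.mono
  have hkt : Tendsto k atTop atTop := by
    have h1 : Tendsto (fun l : ℝ => (l * X - c) / Real.pi + 1 / 2) atTop atTop := by
      apply tendsto_atTop_add_const_right
      apply Tendsto.atTop_div_const hpi
      exact (tendsto_atTop_add_const_right _ (-c) (tendsto_id.atTop_mul_const hX))
    exact tendsto_floor_atTop.comp (h1.comp H.top)
  obtain ⟨n2, hn2⟩ := eventually_atTop.1 ((hkt.eventually (eventually_ge_atTop (max k1 (kk a b ρ s α β (lam 0)))))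
    )
  set N := max n1 n2 with hN
  have hstep : ∀ n, N ≤ n → k (n + 1) = k n + 1 := by
    intro n hn
    have hlt : k n < k (n + 1) := lt_of_le_of_ne (hkm (Nat.le_succ n)) (hn1 n (le_trans (le_max_left _ _) hn))
    have hkn := hn2 n (le_trans (le_max_right _ _) hn)
    obtain ⟨μ, w, h1, h2, h3, h4, h5⟩ := hk1 (k n + 1) (by have := le_max_left k1 (kk a b ρ s α β (lam 0)); omega)
    have hμ0 : lam 0 < μ := by
      by_contra hcon; push Not at hcon
      have := hmono hcon
      have := le_max_right k1 (kk a b ρ s α β (lam 0))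
      omega
    obtain ⟨j, rfl⟩ := H.compl μ w hμ0 h1 h2 h3 h4
    change k j = k n + 1 at h5
    have : n < j := by
      by_contra hcon; push Not at hcon
      have := hkm hcon
      omega
    have := hkm this
    simp only [Nat.succ_eq_add_one] at this
    omega
  have hform : ∀ j : ℕ, k (N + j) = k N + j := by
    intro j
    induction j with
    | zero => simp
    | succ j ih => rw [← add_assoc, hstep _ (by omega), ih]; push_cast; ring
  set r : ℝ := (k N - N : ℝ) + c / Real.pi with hr
  have hA : ∀ n, N ≤ n → |lam n| * |lam n - (Real.pi / X) * (n + r)| ≤ K2 / X := by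
    intro n hn
    obtain ⟨j, rfl⟩ := Nat.exists_eq_add_of_le hn
    have h1 := hnear (N + j)
    have h2 : (kk a b ρ s α β (lam (N + j)) : ℝ) = k N + j := by
      have := hform j
      simp only [k] at this ⊢
      rw [this]; push_cast; ring
    rw [h2] at h1
    have e : lam (N + j) - (Real.pi / X) * (((N + j : ℕ) : ℝ) + r) = (lam (N + j) * X - c - (k N + j) * Real.pi) / X := by
      rw [hr]; push_cast; field_simp; ring
    rw [e, abs_div, abs_of_pos hX, ← mul_div_assoc]
    gcongr
  -- linear growth
  obtain ⟨n3, hn3⟩ := eventually_atTop.1 (H.top.eventually (eventually_ge_atTop 1))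
  obtain ⟨n4, hn4⟩ := exists_nat_gt (2 * (K2 / Real.pi + |r| + 1))
  have hgrow : ∀ n, max N (max n3 n4) ≤ n → (n + 1 : ℝ) ≤ (2 * X / Real.pi) * lam n := by
    intro n hn
    have hnN : N ≤ n := le_trans (le_max_left _ _) hn
    have hnn3 : n3 ≤ n := le_trans (le_trans (le_max_left _ _) (le_max_right _ _)) hn
    have hnn4 : (n4 : ℝ) ≤ n := by
      exact_mod_cast le_trans (le_trans (le_max_right _ _) (le_max_right _ _)) hn
    have h1 := hA n hnN
    have h2 : (1 : ℝ) ≤ lam n := hn3 n hnn3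
    rw [abs_of_pos (by linarith)] at h1
    have h3 : |lam n - (Real.pi / X) * (n + r)| ≤ K2 / X := by
      refine le_trans ?_ h1
      have := abs_nonneg (lam n - (Real.pi / X) * (n + r))
      nlinarith
    have h4 := (abs_le.1 h3).1
    have h5 : (Real.pi / X) * (n + r - K2 / Real.pi) ≤ lam n := by
      have : (Real.pi / X) * (n + r - K2 / Real.pi) = (Real.pi / X) * (n + r) - K2 / X := by field_simp
      linarith
    have h6 : (2 * X / Real.pi) * ((Real.pi / X) * (n + r - K2 / Real.pi)) ≤ (2 * X / Real.pi) * lam n := by gcongr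
    have h7 : (2 * X / Real.pi) * ((Real.pi / X) * (n + r - K2 / Real.pi)) = 2 * (n + r - K2 / Real.pi) := by field_simp
    have := neg_abs_le r
    linarith
  set K := max (2 * X / Real.pi) (K2 / X * (2 * X / Real.pi)) with hK
  have hKp : 0 < K := lt_max_of_lt_left (by positivity)
  refine ⟨r, K, hKp, max N (max n3 n4), fun n hn => ?_⟩
  have hnN : N ≤ n := le_trans (le_max_left _ _) hn
  have hnn3 : n3 ≤ n := le_trans (le_trans (le_max_left _ _) (le_max_right _ _)) hn
  have h2 : (1 : ℝ) ≤ lam n := hn3 n hnn3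
  have g := hgrow n hn
  refine ⟨?_, g.trans ?_, by linarith⟩
  · rw [le_div_iff₀ (by positivity)]
    have h1 := hA n hnN
    rw [abs_of_pos (by linarith)] at h1
    calc _ ≤ |lam n - (Real.pi / X) * (n + r)| * ((2 * X / Real.pi) * lam n) := by gcongr
      _ = (lam n * |lam n - (Real.pi / X) * (n + r)|) * (2 * X / Real.pi) := by ring
      _ ≤ K2 / X * (2 * X / Real.pi) := by gcongr
      _ ≤ K := le_max_right _ _
  · gcongr; exact le_max_left _ _

end H
end DiracExp

end

noncomputable section
open Set Filter Topology MeasureTheory ComplexConjugate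
namespace DiracExp

abbrev nu (a b : ℝ) : Measure ℝ := volume.restrict (Icc a b)

abbrev HH (a b : ℝ) := Lp ℂ 2 (nu a b)

lemma memLp_of_cont {a b : ℝ} {φ : ℝ → ℂ} (h : ContinuousOn φ (Icc a b)) : MemLp φ 2 (nu a b) := by
  obtain ⟨B, hB, hb⟩ := exists_bound h
  refine MemLp.of_bound (h.aestronglyMeasurable measurableSet_Icc) B ?_
  rw [ae_restrict_iff' measurableSet_Icc]
  exact Eventually.of_forall fun x hx => hb x hx

open Classical in
/-- the class of a function in `L²` -/
def vec (a b : ℝ) (φ : ℝ → ℂ) : HH a b := if h : MemLp φ 2 (nu a b) then h.toLp φ else 0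

lemma vec_ae {a b : ℝ} {φ : ℝ → ℂ} (h : MemLp φ 2 (nu a b)) : vec a b φ =ᵐ[nu a b] φ := by
  rw [vec, dif_pos h]; exact h.coeFn_toLp

lemma vec_congr {a b : ℝ} {φ ψ : ℝ → ℂ} (hφ : MemLp φ 2 (nu a b))
    (h : ∀ x ∈ Icc a b, φ x = ψ x) : vec a b φ = vec a b ψ := by
  have h1 : φ =ᵐ[nu a b] ψ := by
    rw [Filter.EventuallyEq, ae_restrict_iff' measurableSet_Icc]
    exact Eventually.of_forall h
  have hψ : MemLp ψ 2 (nu a b) := (memLp_congr_ae h1).1 hφ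
  apply Lp.ext
  exact (vec_ae hφ).trans (h1.trans (vec_ae hψ).symm)

lemma inner_eq {a b : ℝ} (hab : a ≤ b) (F G : HH a b) : 
    inner ℝ F G = ∫ x in a..b, (conj (F x) * G x).re := by
  rw [L2.inner_def, intervalIntegral.integral_of_le hab, integral_Icc_eq_integral_Ioc]
  congr 1; ext x
  rw [real_inner_eq_re_inner ℂ]
  simp [RCLike.inner_apply, mul_comm]

lemma inner_vec_left {a b : ℝ} (hab : a ≤ b) {φ : ℝ → ℂ} (hφ : MemLp φ 2 (nu a b)) (G : HH a b) : 
    inner ℝ (vec a b φ) G = ∫ x in a..b, (conj (φ x) * G x).re := by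
  rw [inner_eq hab, intervalIntegral.integral_of_le hab, intervalIntegral.integral_of_le hab,
    ← integral_Icc_eq_integral_Ioc, ← integral_Icc_eq_integral_Ioc]
  apply integral_congr_ae
  filter_upwards [vec_ae hφ] with x h1
  rw [h1]

lemma inner_vec {a b : ℝ} (hab : a ≤ b) {φ ψ : ℝ → ℂ} (hφ : MemLp φ 2 (nu a b)) (hψ : MemLp ψ 2 (nu a b)) : 
    inner ℝ (vec a b φ) (vec a b ψ) = ∫ x in a..b, (conj (φ x) * ψ x).re := by
  rw [inner_eq hab, intervalIntegral.integral_of_le hab, intervalIntegral.integral_of_le hab,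
    ← integral_Icc_eq_integral_Ioc, ← integral_Icc_eq_integral_Ioc]
  apply integral_congr_ae
  filter_upwards [vec_ae hφ, vec_ae hψ] with x h1 h2
  rw [h1, h2]

/-- weighted class -/
def wv (ρ : ℝ → ℝ) (φ : ℝ → ℂ) : ℝ → ℂ := fun x => ((Real.sqrt (ρ x) : ℝ) : ℂ) * φ x

section D
variable {a b : ℝ} {ρ s : ℝ → ℝ} {m : ℝ → ℂ} (D : DData a b ρ s m)
include D

lemma DData.wv_cont {φ : ℝ → ℂ} (h : ContinuousOn φ (Icc a b)) : ContinuousOn (wv ρ φ) (Icc a b) :=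
  (Complex.continuous_ofReal.comp_continuousOn (Real.continuous_sqrt.comp_continuousOn D.hρ.continuousOn)).mul h

lemma DData.wv_memLp {φ : ℝ → ℂ} (h : ContinuousOn φ (Icc a b)) : MemLp (wv ρ φ) 2 (nu a b) :=
  memLp_of_cont (D.wv_cont h)

lemma DData.wv_mul {φ ψ : ℝ → ℂ} {x : ℝ} (hx : x ∈ Icc a b) :
    (conj (wv ρ φ x) * wv ρ ψ x).re = ρ x * (conj (φ x) * ψ x).re := by
  have h := Real.mul_self_sqrt (D.hpos x hx).le
  have e : conj (wv ρ φ x) * wv ρ ψ x = ((ρ x : ℝ) : ℂ) * (conj (φ x) * ψ x) := by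
    rw [← h]; simp only [wv, map_mul, Complex.conj_ofReal]; push_cast; ring
  rw [e, Complex.re_ofReal_mul]

lemma DData.inner_wv {φ ψ : ℝ → ℂ} (hφ : ContinuousOn φ (Icc a b)) (hψ : ContinuousOn ψ (Icc a b)) :
    inner ℝ (vec a b (wv ρ φ)) (vec a b (wv ρ ψ)) = ∫ x in a..b, ρ x * (conj (φ x) * ψ x).re := by
  rw [inner_vec D.hab.le (D.wv_memLp hφ) (D.wv_memLp hψ)]
  apply intervalIntegral.integral_congr
  intro x hx
  rw [uIcc_of_le D.hab.le] at hx
  exact D.wv_mul hx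

lemma DData.bessel {ι : Type*} [DecidableEq ι] {z : ι → ℝ → ℂ} (hz : ∀ n, ContinuousOn (z n) (Icc a b))
    (orth : ∀ k n, (∫ x in a..b, ρ x * (conj (z k x) * z n x).re) = if k = n then 1 else 0)
    {h : ℝ → ℂ} (hh : ContinuousOn h (Icc a b)) :
    Summable (fun n => (∫ x in a..b, ρ x * (conj (z n x) * h x).re) ^ 2) := by
  have ho : Orthonormal ℝ (fun n => vec a b (wv ρ (z n))) := by
    rw [orthonormal_iff_ite]
    intro i j
    rw [D.inner_wv (hz i) (hz j), orth]
  have := ho.inner_products_summable (vec a b (wv ρ h))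
  refine this.congr fun n => ?_
  rw [D.inner_wv (hz n) hh, Real.norm_eq_abs, sq_abs]

/-- Green identity -/
lemma DData.green {F : ℝ → ℂ} (hF : ContDiffOn ℝ 1 F (Icc a b)) : ∃ h : ℝ → ℂ, ContinuousOn h (Icc a b) ∧
    ∀ lam z, IsSol a b ρ s m lam z →
      lam * (∫ x in a..b, ρ x * (conj (z x) * F x).re) =
        (∫ x in a..b, ρ x * (conj (z x) * h x).re) - ((conj (F b) * z b).im - (conj (F a) * z a).im) := by
  obtain ⟨hF'c, hF'⟩ := c1_deriv D.hab hF
  set F' := derivWithin F (Icc a b)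
  have hFc := hF.continuousOn
  have hmc := D.hm.continuousOn
  have hρc := D.hρ.continuousOn
  have hρi : ContinuousOn (fun x => (((ρ x)⁻¹ : ℝ) : ℂ)) (Icc a b) :=
      Complex.continuous_ofReal.comp_continuousOn (hρc.inv₀ (fun x hx => (D.hpos x hx).ne'))
  have hsc : ContinuousOn (fun x => (s x : ℂ)) (Icc a b) := Complex.continuous_ofReal.comp_continuousOn D.hs
  have hFcc : ContinuousOn (fun x => conj (F x)) (Icc a b) := Complex.continuous_conj.comp_continuousOn hFc
  let h : ℝ → ℂ := fun x => Complex.I * (((ρ x)⁻¹ : ℝ) : ℂ) * (F' x - Complex.I * s x * F x - m x * conj (F x))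
  have hc : ContinuousOn h (Icc a b) := by fun_prop
  refine ⟨h, hc, fun lam z hz => ?_⟩
  have hzc := hz.continuousOn
  have hzcc : ContinuousOn (fun x => conj (z x)) (Icc a b) := Complex.continuous_conj.comp_continuousOn hzc
  let Φ' : ℝ → ℝ := fun x => ρ x * (conj (z x) * h x).re - lam * (ρ x * (conj (z x) * F x).re)
  have i1 : IntervalIntegrable (fun x => ρ x * (conj (z x) * h x).re) volume a b :=
    ii_of_cont D.hab.le (hρc.mul (Complex.continuous_re.comp_continuousOn (hzcc.mul hc)))
  have i2 : IntervalIntegrable (fun x => lam * (ρ x * (conj (z x) * F x).re)) volume a b :=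
    (ii_of_cont D.hab.le (hρc.mul (Complex.continuous_re.comp_continuousOn (hzcc.mul hFc)))).const_mul _
  have hd : ∀ x ∈ Icc a b, HasDerivWithinAt (fun x => (conj (F x) * z x).im) (Φ' x) (Icc a b) x := by
    intro x hx
    have h1 : HasDerivWithinAt (fun x => conj (F x)) (conj (F' x)) (Icc a b) x := (hF' x hx).star
    have h2 := Complex.imCLM.hasFDerivAt.comp_hasDerivWithinAt x (h1.mul (hz x hx))
    refine h2.congr_deriv ?_
    have hr : ρ x * (ρ x)⁻¹ = 1 := mul_inv_cancel₀ (D.hpos x hx).ne'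
    simp only [Φ', h]
    generalize (ρ x)⁻¹ = r at hr
    simp
    generalize F' x = f'
    generalize F x = f
    generalize z x = y
    generalize m x = mm
    linear_combination (-(y.re * (-(f'.im - s x * f.re - (mm.im * f.re - mm.re * f.im))) + y.im * (f'.re + s x * f.im - (mm.re * f.re + mm.im * f.im)))) * hr
  have key := intervalIntegral.integral_eq_sub_of_hasDerivAt_of_le D.hab.le
    (fun x hx => (hd x hx).continuousWithinAt)
    (fun x hx => (hd x (Ioo_subset_Icc_self hx)).hasDerivAt (Icc_mem_nhds hx.1 hx.2)) (i1.sub i2)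
  rw [intervalIntegral.integral_sub i1 i2, intervalIntegral.integral_const_mul] at key
  linarith

end D
end DiracExp

end

noncomputable section
open Set Filter Topology MeasureTheory ComplexConjugate
namespace DiracExp

section Conv
variable {E : Type*} [NormedAddCommGroup E] [NormedSpace ℝ E] [CompleteSpace E]

def Conv (u : ℕ → E) : Prop := ∃ S, Tendsto (fun N => ∑ n ∈ Finset.range N, u n) atTop (𝓝 S)

omit [NormedSpace ℝ E] [CompleteSpace E] in
lemma Conv.add {u v : ℕ → E} (hu : Conv u) (hv : Conv v) : Conv (fun n => u n + v n) := by
  obtain ⟨S, hS⟩ := hu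
  obtain ⟨T, hT⟩ := hv
  refine ⟨S + T, (hS.add hT).congr fun N => ?_⟩
  rw [Finset.sum_add_distrib]

omit [CompleteSpace E] in
lemma Conv.smul {u : ℕ → E} (c : ℝ) (hu : Conv u) : Conv (fun n => c • u n) := by
  obtain ⟨S, hS⟩ := hu
  refine ⟨c • S, (hS.const_smul c).congr fun N => ?_⟩
  rw [Finset.smul_sum]

omit [NormedSpace ℝ E] [CompleteSpace E] in
lemma Conv.of_summable {u : ℕ → E} (hu : Summable u) : Conv u := ⟨_, hu.hasSum.tendsto_sum_nat⟩

omit [NormedSpace ℝ E] [CompleteSpace E] in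
lemma Conv.congr {u v : ℕ → E} (hu : Conv u) {N0 : ℕ} (h : ∀ n, N0 ≤ n → u n = v n) : Conv v := by
  have h1 : Summable (fun n => v n - u n) := by
    apply summable_of_finite_support
    apply (Finset.range N0).finite_toSet.subset
    intro n hn
    by_contra hc
    simp only [Finset.coe_range, mem_Iio, not_lt] at hc
    exact hn (by simp [h n hc])
  have := hu.add (Conv.of_summable h1)
  simpa using this

lemma Conv.of_close {u v : ℕ → E} (hu : Conv u) {N0 : ℕ} {K : ℝ}
    (h : ∀ n, N0 ≤ n → ‖v n - u n‖ ≤ K / ((n : ℝ) + 1) ^ 2) : Conv v := by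
  have h0 : Summable (fun n : ℕ => K / ((n : ℝ) + 1) ^ 2) := by
    have h2 := (Real.summable_one_div_nat_pow (p := 2)).2 (by norm_num)
    have := ((summable_nat_add_iff 1).2 h2).mul_left K
    refine this.congr fun n => ?_
    push_cast; ring
  have h1 : Summable (fun n => v n - u n) := by
    refine Summable.of_norm_bounded_eventually_nat h0 ?_
    filter_upwards [eventually_ge_atTop N0] with n hn using h n hn
  have := hu.add (Conv.of_summable h1)
  simpa using this
end Conv

/-- Dirichlet test in the space of continuous functions -/
lemma dirichlet {X : Type*} [TopologicalSpace X] [CompactSpace X] (A q : C(X, ℂ))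
    (hq : ∀ x, ‖q x‖ = 1) (hq1 : ∀ x, q x ≠ 1) : 
    Conv (fun n : ℕ => (1 / ((n : ℝ) + 1)) • (A * q ^ n)) := by
  have hδ : ∃ δ > 0, ∀ x, δ ≤ ‖q x - 1‖ := by
    rcases isEmpty_or_nonempty X with hX | hX
    · exact ⟨1, one_pos, fun x => (hX.false x).elim⟩
    · obtain ⟨x0, h0⟩ := (by fun_prop : Continuous fun x => ‖q x - 1‖).exists_forall_le_of_hasCompactMulSupport (HasCompactMulSupport.of_compactSpace _)
      exact ⟨‖q x0 - 1‖, norm_pos_iff.2 (sub_ne_zero.2 (hq1 x0)), h0⟩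
  obtain ⟨δ, hδ, hq2⟩ := hδ
  have hb : ∀ n, ‖∑ i ∈ Finset.range n, A * q ^ i‖ ≤ ‖A‖ * (2 / δ) := by
    intro n
    rw [← Finset.mul_sum]
    refine (norm_mul_le _ _).trans ?_
    gcongr
    rw [ContinuousMap.norm_le _ (by positivity)]
    intro x
    have : (∑ i ∈ Finset.range n, q ^ i) x = ∑ i ∈ Finset.range n, (q x) ^ i := by
      simp [ContinuousMap.sum_apply]
    rw [this, geom_sum_eq (hq1 x), norm_div]
    gcongr
    · refine (norm_sub_le _ _).trans ?_
      rw [norm_pow, hq]; norm_num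
    · exact hq2 x
  have hanti : Antitone (fun n : ℕ => 1 / ((n : ℝ) + 1)) := by
    intro i j hij
    have : (i : ℝ) ≤ j := by exact_mod_cast hij
    dsimp only
    gcongr
  exact cauchySeq_tendsto_of_complete
    (hanti.cauchySeq_series_mul_of_tendsto_zero_of_bounded tendsto_one_div_add_atTop_nhds_zero_nat hb)

open Classical in
/-- restriction of a function to a compact interval -/
def rst (c d : ℝ) (φ : ℝ → ℂ) : C(Icc c d, ℂ) :=
  if h : ContinuousOn φ (Icc c d) then ⟨fun x => φ x, h.comp_continuous continuous_subtype_val (fun x => x.2)⟩ else 0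

lemma rst_apply {c d : ℝ} {φ : ℝ → ℂ} (h : ContinuousOn φ (Icc c d)) (x : Icc c d) : rst c d φ x = φ x := by
  rw [rst, dif_pos h]; rfl

section H
variable {a b : ℝ} {ρ s : ℝ → ℝ} {m : ℝ → ℂ} (D : DData a b ρ s m)
  {α β : ℝ} {lam : ℕ → ℝ} {z : ℕ → ℝ → ℂ} (H : Half a b ρ s m α β lam z)
include D H

lemma Half.bterm {r K3 : ℝ} {N0 : ℕ} (hK3 : 0 < K3) (has : ∀ n, N0 ≤ n → 
    |lam n - (Real.pi / prim a ρ b) * (n + r)| ≤ K3 / (n + 1) ∧ (n + 1 : ℝ) ≤ K3 * lam n ∧ 0 < lam n)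
    {e : ℝ} (he : e ∈ Icc a b) {γ : ℝ} {κ : ℕ → ℝ} 
    (hκ : ∀ n, z n e = κ n * (Complex.I * Complex.exp (γ * Complex.I))) :
    ∃ K, 0 < K ∧ ∃ N1 : ℕ, ∀ n, N1 ≤ n → ∀ x ∈ Icc a b,
      ‖((κ n / lam n : ℝ) : ℂ) * z n x - ((1 / ((n : ℝ) + 1) : ℝ) : ℂ) * 
        ((((1 / Real.pi : ℝ) : ℂ) * Complex.exp ((-(Real.pi / prim a ρ b * (prim a ρ x - prim a ρ e) * r) : ℝ) * Complex.I)
          * Complex.exp ((prim a s x - prim a s e : ℝ) * Complex.I) * (Complex.I * Complex.exp (γ * Complex.I)))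
        * Complex.exp ((-(Real.pi / prim a ρ b * (prim a ρ x - prim a ρ e)) : ℝ) * Complex.I) ^ n)‖ ≤ K / ((n : ℝ) + 1) ^ 2 := by
  obtain ⟨K, hK, L, hL, hN⟩ := D.normalized
  have hX := D.Xi_pos
  have hpi := Real.pi_pos
  set X := prim a ρ b with hXd
  obtain ⟨N2, hN2⟩ := eventually_atTop.1 (H.top.eventually (eventually_ge_atTop L))
  refine ⟨K * K * (K3 * K3) + K * (K3 * K3) + (1 / X * K3 * (K3 * X) + (1 / X) * ((|1 - r| + X / Real.pi * K3) * K3)), by positivity,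
    max N0 N2, fun n hn x hx => ?_⟩
  obtain ⟨h1, h2, h3⟩ := has n (le_trans (le_max_left _ _) hn)
  have h4 := hN2 n (le_trans (le_max_right _ _) hn)
  set l := lam n with hl
  obtain ⟨b1, b2, b3⟩ := hN l (z n) (H.sol n) (H.nrm n) (by rw [abs_of_pos h3]; exact h4)
  rw [abs_of_pos h3] at b2 b3
  set N : ℝ := (n : ℝ) + 1 with hNd
  have hNp : 0 < N := by positivity
  have hl1 : 1 / l ≤ K3 / N := by
    rw [div_le_div_iff₀ h3 hNp]; linarith
  have hl2 : 1 / l ^ 2 ≤ (K3 * K3) / N ^ 2 := by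
    have : 1 / l ^ 2 = (1 / l) * (1 / l) := by ring
    rw [this]
    have : (K3 * K3) / N ^ 2 = (K3 / N) * (K3 / N) := by ring
    rw [this]
    gcongr
  set y := prim a ρ x - prim a ρ e with hy
  have hyX : |y| ≤ X := by
    have p1 := D.prim_le hx
    have p2 := D.prim_le he
    rw [abs_le]; constructor <;> linarith
  set U := Complex.exp ((prim a s x - prim a s e : ℝ) * Complex.I) with hU
  set V := Complex.I * Complex.exp (γ * Complex.I) with hV
  have hUn : ‖U‖ = 1 := Complex.norm_exp_ofReal_mul_I _
  have hVn : ‖V‖ = 1 := by rw [hV, norm_mul, Complex.norm_I, Complex.norm_exp_ofReal_mul_I, one_mul]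
  set E1 := Complex.exp ((-(l * y) : ℝ) * Complex.I) with hE1
  set E0 := Complex.exp ((-(Real.pi / X * (n + r) * y) : ℝ) * Complex.I) with hE0
  have hE1n : ‖E1‖ = 1 := Complex.norm_exp_ofReal_mul_I _
  have hE0n : ‖E0‖ = 1 := Complex.norm_exp_ofReal_mul_I _
  have hκn : ‖z n e‖ = |κ n| := by rw [hκ, norm_mul, hVn, mul_one, Complex.norm_real, Real.norm_eq_abs]
  have hκK : |κ n| ≤ K := hκn ▸ b1 e he
  -- step 1
  set δ1 := z n x - E1 * U * (κ n * V) with hδ1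
  have s1 : ‖δ1‖ ≤ K * (1 / l) := by
    have e1 : ph a ρ s l x * δ1 = ph a ρ s l x * z n x - ph a ρ s l e * z n e := by
      rw [hδ1, mul_sub, hκ]
      congr 1
      rw [← mul_assoc]
      congr 1
      rw [hE1, hU, ph, ph, ← Complex.exp_add, ← Complex.exp_add]
      congr 1
      rw [hy]; push_cast; ring
    have e2 : ‖δ1‖ = ‖ph a ρ s l x * δ1‖ := by rw [norm_mul, ph_norm, one_mul]
    rw [e2, e1, mul_one_div, le_div_iff₀ h3, mul_comm]
    exact b2 x hx e he
  have s2 : |κ n ^ 2 - 1 / X| ≤ K * (1 / l) := by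
    have := b3 e he
    rw [hκn, sq_abs] at this
    rw [mul_one_div, le_div_iff₀ h3, mul_comm]; exact this
  have s3 : ‖E1 - E0‖ ≤ (K3 / N) * X := by
    have e1 : E1 - E0 = E0 * (Complex.exp (Complex.I * ((-((l - Real.pi / X * (n + r)) * y) : ℝ) : ℂ)) - 1) := by
      rw [mul_sub, mul_one, hE0, hE1, ← Complex.exp_add]
      congr 2
      push_cast; ring
    rw [e1, norm_mul, hE0n, one_mul]
    refine (Real.norm_exp_I_mul_ofReal_sub_one_le).trans ?_
    rw [Real.norm_eq_abs, abs_neg, abs_mul]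
    gcongr
  have s4 : |1 / l - X / Real.pi * (1 / N)| ≤ (|1 - r| + X / Real.pi * K3) * K3 / N ^ 2 := by
    have e1 : 1 / l - X / Real.pi * (1 / N) = ((1 - r) - X / Real.pi * (l - Real.pi / X * (n + r))) * (1 / N) * (1 / l) := by
      rw [hNd]; field_simp; ring
    have e2 : |(1 - r) - X / Real.pi * (l - Real.pi / X * (n + r))| ≤ |1 - r| + X / Real.pi * K3 := by
      refine (abs_sub _ _).trans ?_
      rw [abs_mul, abs_of_pos (by positivity : 0 < X / Real.pi)]
      gcongr
      refine h1.trans ?_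
      rw [div_le_iff₀ hNp]
      have : (0 : ℝ) ≤ n := Nat.cast_nonneg n
      nlinarith
    rw [e1, abs_mul, abs_mul, abs_of_pos (by positivity : 0 < 1 / N), abs_of_pos (by positivity : 0 < 1 / l)]
    calc _ ≤ (|1 - r| + X / Real.pi * K3) * (1 / N) * (K3 / N) := by gcongr
      _ = _ := by ring
  have eT : ((1 / N : ℝ) : ℂ) * 
        ((((1 / Real.pi : ℝ) : ℂ) * Complex.exp ((-(Real.pi / X * y * r) : ℝ) * Complex.I) * U * V)
        * Complex.exp ((-(Real.pi / X * y) : ℝ) * Complex.I) ^ n) =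
        ((1 / X : ℝ) : ℂ) * (((X / Real.pi * (1 / N) : ℝ) : ℂ) * (E0 * U * V)) := by
    have : E0 = Complex.exp ((-(Real.pi / X * y * r) : ℝ) * Complex.I) * Complex.exp ((-(Real.pi / X * y) : ℝ) * Complex.I) ^ n := by
      rw [← Complex.exp_nat_mul, ← Complex.exp_add, hE0]
      congr 1; push_cast; ring
    rw [this]
    have hXc : (X : ℂ) ≠ 0 := by exact_mod_cast hX.ne'
    have hpc : (Real.pi : ℂ) ≠ 0 := by exact_mod_cast hpi.ne'
    push_cast
    field_simp
  rw [eT]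
  have eS : ((κ n / l : ℝ) : ℂ) * z n x - ((1 / X : ℝ) : ℂ) * (((X / Real.pi * (1 / N) : ℝ) : ℂ) * (E0 * U * V))
     = ((κ n * (1 / l) : ℝ) : ℂ) * δ1 + ((1 / l * (κ n ^ 2 - 1 / X) : ℝ) : ℂ) * (E1 * U * V)
      + (((1 / X * (1 / l) : ℝ) : ℂ) * ((E1 - E0) * U * V) 
      + ((1 / X * (1 / l - X / Real.pi * (1 / N)) : ℝ) : ℂ) * (E0 * U * V)) := by
    rw [hδ1]; push_cast; ring
  rw [eS]
  refine (norm_add_le _ _).trans ((add_le_add (norm_add_le _ _) (norm_add_le _ _)).trans ?_)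
  simp only [norm_mul, hUn, hVn, hE1n, hE0n, mul_one, Complex.norm_real, Real.norm_eq_abs, abs_mul]
  rw [abs_of_pos (by positivity : 0 < 1 / X), abs_of_pos (by positivity : 0 < 1 / l)]
  have g1 : |κ n| * (1 / l) * ‖δ1‖ ≤ K * K * (K3 * K3) / N ^ 2 := by
    calc _ ≤ K * (1 / l) * (K * (1 / l)) := by gcongr
      _ = K * K * (1 / l ^ 2) := by ring
      _ ≤ K * K * ((K3 * K3) / N ^ 2) := by gcongr
      _ = _ := by ring
  have g2 : 1 / l * |κ n ^ 2 - 1 / X| ≤ K * (K3 * K3) / N ^ 2 := by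
    calc _ ≤ 1 / l * (K * (1 / l)) := by gcongr
      _ = K * (1 / l ^ 2) := by ring
      _ ≤ K * ((K3 * K3) / N ^ 2) := by gcongr
      _ = _ := by ring
  have g3 : 1 / X * (1 / l) * ‖E1 - E0‖ ≤ (1 / X * K3 * (K3 * X)) / N ^ 2 := by
    calc _ ≤ 1 / X * (K3 / N) * ((K3 / N) * X) := by gcongr
      _ = _ := by ring
  have g4 : 1 / X * |1 / l - X / Real.pi * (1 / N)| ≤ ((1 / X) * ((|1 - r| + X / Real.pi * K3) * K3)) / N ^ 2 := by
    calc _ ≤ 1 / X * ((|1 - r| + X / Real.pi * K3) * K3 / N ^ 2) := by gcongr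
      _ = _ := by ring
  rw [add_div, add_div, add_div]
  linarith

end H
end DiracExp

end

noncomputable section
open Set Filter Topology MeasureTheory ComplexConjugate
namespace DiracExp

section H
variable {a b : ℝ} {ρ s : ℝ → ℝ} {m : ℝ → ℂ} (D : DData a b ρ s m)
  {α β : ℝ} {lam : ℕ → ℝ} {z : ℕ → ℝ → ℂ} (H : Half a b ρ s m α β lam z)

include D in
lemma DData.prim_lt {x : ℝ} (hx : x ∈ Ioo a b) : 0 < prim a ρ x ∧ prim a ρ x < prim a ρ b := by
  have : StrictMonoOn (prim a ρ) (Icc a b) := by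
    apply strictMonoOn_of_deriv_pos (convex_Icc a b) (prim_cont D.hab.le D.hρ.continuousOn)
    intro x hx
    rw [interior_Icc] at hx
    rw [((prim_hasDeriv D.hab.le D.hρ.continuousOn (Ioo_subset_Icc_self hx)).hasDerivAt
      (Icc_mem_nhds hx.1 hx.2)).deriv]
    exact D.hpos x (Ioo_subset_Icc_self hx)
  have haI : a ∈ Icc a b := ⟨le_rfl, D.hab.le⟩
  have hbI : b ∈ Icc a b := ⟨D.hab.le, le_rfl⟩
  have h1 := this haI (Ioo_subset_Icc_self hx) hx.1
  rw [prim_self] at h1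
  exact ⟨h1, this (Ioo_subset_Icc_self hx) hbI hx.2⟩

include D H

lemma Half.bconv {r K3 : ℝ} {N0 : ℕ} (hK3 : 0 < K3) (has : ∀ n, N0 ≤ n → 
    |lam n - (Real.pi / prim a ρ b) * (n + r)| ≤ K3 / (n + 1) ∧ (n + 1 : ℝ) ≤ K3 * lam n ∧ 0 < lam n)
    {e : ℝ} (he : e = a ∨ e = b) {γ : ℝ} {κ : ℕ → ℝ} 
    (hκ : ∀ n, z n e = κ n * (Complex.I * Complex.exp (γ * Complex.I))) {c d : ℝ} (hc : a < c) (hd : d < b) :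
    Conv (fun n => (κ n / lam n) • rst c d (z n)) := by
  have heI : e ∈ Icc a b := by
    rcases he with rfl | rfl
    · exact ⟨le_rfl, D.hab.le⟩
    · exact ⟨D.hab.le, le_rfl⟩
  have hsub : Icc c d ⊆ Icc a b := Icc_subset_Icc hc.le hd.le
  have hX := D.Xi_pos
  have hpi := Real.pi_pos
  obtain ⟨K, hK, N1, h⟩ := H.bterm D hK3 has heI hκ
  set X := prim a ρ b with hXd
  let Af : ℝ → ℂ := fun x => ((1 / Real.pi : ℝ) : ℂ) * Complex.exp ((-(Real.pi / X * (prim a ρ x - prim a ρ e) * r) : ℝ) * Complex.I)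
          * Complex.exp ((prim a s x - prim a s e : ℝ) * Complex.I) * (Complex.I * Complex.exp (γ * Complex.I))
  let qf : ℝ → ℂ := fun x => Complex.exp ((-(Real.pi / X * (prim a ρ x - prim a ρ e)) : ℝ) * Complex.I)
  have hξ : ContinuousOn (prim a ρ) (Icc c d) := (prim_cont D.hab.le D.hρ.continuousOn).mono hsub
  have hS : ContinuousOn (prim a s) (Icc c d) := (prim_cont D.hab.le D.hs).mono hsub
  have hA : ContinuousOn Af (Icc c d) := by fun_prop
  have hq : ContinuousOn qf (Icc c d) := by fun_prop
  have hdir := dirichlet (rst c d Af) (rst c d qf) (fun x => by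
      rw [rst_apply hq]; exact Complex.norm_exp_ofReal_mul_I _) (fun x => by
      rw [rst_apply hq]
      intro hcon
      have h1 := congrArg Complex.im hcon
      simp only [qf] at h1
      rw [Complex.exp_ofReal_mul_I_im, Complex.one_im, Real.sin_neg, neg_eq_zero] at h1
      have hx : (x : ℝ) ∈ Ioo a b := ⟨hc.trans_le x.2.1, x.2.2.trans_lt hd⟩
      obtain ⟨p1, p2⟩ := D.prim_lt hx
      rcases he with rfl | rfl
      · rw [prim_self, sub_zero] at h1
        have : 0 < Real.sin (Real.pi / X * prim e ρ x) := by
          apply Real.sin_pos_of_pos_of_lt_pi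
          · positivity
          · calc _ < Real.pi / X * X := by gcongr
              _ = _ := by field_simp
        linarith
      · rw [← neg_sub, mul_neg, Real.sin_neg, neg_eq_zero] at h1
        have hh : 0 < X - prim a ρ x := by linarith
        have : 0 < Real.sin (Real.pi / X * (X - prim a ρ x)) := by
          apply Real.sin_pos_of_pos_of_lt_pi
          · positivity
          · calc _ < Real.pi / X * X := by gcongr; linarith
              _ = _ := by field_simp
        linarith)
  refine hdir.of_close (N0 := N1) (K := K) fun n hn => ?_
  rw [ContinuousMap.norm_le _ (by positivity)]
  intro x
  have := h n hn x (hsub x.2)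
  simp only [ContinuousMap.sub_apply, ContinuousMap.smul_apply, ContinuousMap.mul_apply, ContinuousMap.pow_apply,
    rst_apply hA, rst_apply hq, rst_apply ((H.sol n).continuousOn.mono hsub), Complex.real_smul]
  exact this

lemma Half.conv {F : ℝ → ℂ} (hF : ContDiffOn ℝ 1 F (Icc a b)) {c d : ℝ} (hc : a < c) (hd : d < b) :
    Conv (fun n => (∫ x in a..b, ρ x * (conj (z n x) * F x).re) • rst c d (z n)) := by
  obtain ⟨r, K3, hK3, N0, has⟩ := H.asymp D
  obtain ⟨h, hh, hg⟩ := D.green hF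
  choose κ hκ using fun n => bc_repr (H.bca n)
  choose κ' hκ' using fun n => bc_repr (H.bcb n)
  have c1 := H.bconv D hK3 has (Or.inl rfl) hκ hc hd
  have c2 := H.bconv D hK3 has (Or.inr rfl) hκ' hc hd
  have hsub : Icc c d ⊆ Icc a b := Icc_subset_Icc hc.le hd.le
  set hn : ℕ → ℝ := fun n => ∫ x in a..b, ρ x * (conj (z n x) * h x).re with hhn
  have hsum : Summable (fun n => hn n ^ 2) := D.bessel (fun n => (H.sol n).continuousOn) H.orth hh
  obtain ⟨K, hK, L, hL, hN⟩ := D.normalized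
  obtain ⟨N2, hN2⟩ := eventually_atTop.1 (H.top.eventually (eventually_ge_atTop L))
  have c3 : Conv (fun n => (hn n / lam n) • rst c d (z n)) := by
    apply Conv.of_summable
    have h0 : Summable (fun n : ℕ => K3 ^ 2 * (1 / ((n : ℝ) + 1) ^ 2)) := by
      have h2 := (Real.summable_one_div_nat_pow (p := 2)).2 (by norm_num)
      have := ((summable_nat_add_iff 1).2 h2).mul_left (K3 ^ 2)
      refine this.congr fun n => ?_
      push_cast; ring
    refine Summable.of_norm_bounded_eventually_nat ((hsum.add h0).mul_left K) ?_
    filter_upwards [eventually_ge_atTop (max N0 N2)] with n hn'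
    obtain ⟨h1, h2, h3⟩ := has n (le_trans (le_max_left _ _) hn')
    have h4 := hN2 n (le_trans (le_max_right _ _) hn')
    obtain ⟨b1, -, -⟩ := hN _ (z n) (H.sol n) (H.nrm n) (by rw [abs_of_pos h3]; exact h4)
    have hrn : ‖rst c d (z n)‖ ≤ K := by
      rw [ContinuousMap.norm_le _ hK.le]
      intro x
      rw [rst_apply ((H.sol n).continuousOn.mono hsub)]
      exact b1 x (hsub x.2)
    rw [norm_smul, Real.norm_eq_abs, abs_div, abs_of_pos h3]
    have h5 : 1 / lam n ≤ K3 * (1 / ((n : ℝ) + 1)) := by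
      rw [mul_one_div, div_le_div_iff₀ h3 (by positivity)]; linarith
    have h6 : |hn n| / lam n ≤ hn n ^ 2 + K3 ^ 2 * (1 / ((n : ℝ) + 1) ^ 2) := by
      have e1 : |hn n| / lam n = |hn n| * (1 / lam n) := by ring
      have e2 : K3 ^ 2 * (1 / ((n : ℝ) + 1) ^ 2) = (K3 * (1 / ((n : ℝ) + 1))) ^ 2 := by
        rw [mul_pow, one_div_pow]
      have h7 : |hn n| * (1 / lam n) ≤ |hn n| * (K3 * (1 / ((n : ℝ) + 1))) := by gcongr
      rw [e1, e2, ← sq_abs (hn n)]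
      nlinarith [sq_nonneg (|hn n| - K3 * (1 / ((n : ℝ) + 1))), sq_nonneg (|hn n|), sq_nonneg (K3 * (1 / ((n : ℝ) + 1)))]
    calc _ ≤ (hn n ^ 2 + K3 ^ 2 * (1 / ((n : ℝ) + 1) ^ 2)) * K := by gcongr
      _ = _ := by ring
  set φa := (conj (F a) * Complex.exp (α * Complex.I)).re with hφa
  set φb := (conj (F b) * Complex.exp (β * Complex.I)).re with hφb
  have him : ∀ (f v : ℂ) (k : ℝ), (f * (k * (Complex.I * v))).im = k * (f * v).re := by
    intro f v k
    have : f * (k * (Complex.I * v)) = k * (Complex.I * (f * v)) := by ring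
    rw [this, Complex.im_ofReal_mul]; simp
  refine (((c3.add (c1.smul φa)).add (c2.smul (-φb)))).congr (N0 := N0) fun n hn' => ?_
  obtain ⟨h1, h2, h3⟩ := has n hn'
  have g := hg _ _ (H.sol n)
  rw [hκ n, hκ' n, him, him, ← hφa, ← hφb] at g
  have e : (∫ x in a..b, ρ x * (conj (z n x) * F x).re) = hn n / lam n + φa * (κ n / lam n) + (-φb) * (κ' n / lam n) := by
    have : (∫ x in a..b, ρ x * (conj (z n x) * F x).re) = (lam n * ∫ x in a..b, ρ x * (conj (z n x) * F x).re) / lam n := by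
      field_simp
    rw [this, g]
    simp only [hhn]
    ring
  rw [e]
  ext x
  simp only [ContinuousMap.add_apply, ContinuousMap.smul_apply, Complex.real_smul]
  push_cast
  ring

end H
end DiracExp

end

noncomputable section
open Set Filter Topology MeasureTheory ComplexConjugate
namespace DiracExp

section evK
open BoundedContinuousFunction
variable {X : Type*} [TopologicalSpace X] [CompactSpace X]
  {H : Type*} [NormedAddCommGroup H] [InnerProductSpace ℝ H]

/-- `h ↦ ⟪k ·, h⟫` -/
def evK (k : X →ᵇ H) : H →L[ℝ] (X →ᵇ ℝ) :=
  LinearMap.mkContinuous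
    { toFun := fun h => BoundedContinuousFunction.mkOfCompact
        ⟨fun x => inner ℝ (k x) h, k.continuous.inner continuous_const⟩
      map_add' := fun h g => by ext x; simp [inner_add_right]
      map_smul' := fun c h => by ext x; simp [inner_smul_right] } ‖k‖ (by
    intro h
    rw [BoundedContinuousFunction.norm_le (by positivity)]
    intro x
    refine (norm_inner_le_norm (𝕜 := ℝ) (k x) h).trans ?_
    gcongr
    exact k.norm_coe_le_norm x)

lemma evK_apply (k : X →ᵇ H) (h : H) (x : X) : evK k h x = inner ℝ (k x) h := rfl

lemma evK_compact (k : X →ᵇ H) : IsCompactOperator (evK k) := by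
  refine (isCompactOperator_iff_isCompact_closure_image_closedBall (evK k : H →ₗ[ℝ] (X →ᵇ ℝ)) one_pos).2 ?_
  refine BoundedContinuousFunction.arzela_ascoli (Metric.closedBall 0 ‖k‖) (isCompact_closedBall _ _) _ ?_ ?_
  · rintro _ x ⟨h, hh, rfl⟩
    rw [mem_closedBall_zero_iff] at hh ⊢
    refine (norm_inner_le_norm (𝕜 := ℝ) (k x) h).trans ?_
    have := k.norm_coe_le_norm x
    nlinarith [norm_nonneg h, norm_nonneg k]
  · intro x0
    rw [Metric.equicontinuousAt_iff_right]
    intro ε hε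
    have h1 := (Metric.continuous_iff'.1 k.continuous) x0 ε hε
    filter_upwards [h1] with x hx
    rintro ⟨_, h, hh, rfl⟩
    rw [mem_closedBall_zero_iff] at hh
    rw [dist_comm]
    show dist (inner ℝ (k x) h) (inner ℝ (k x0) h) < ε
    rw [dist_eq_norm, ← inner_sub_left]
    refine (norm_inner_le_norm (𝕜 := ℝ) _ h).trans_lt ?_
    rw [dist_eq_norm] at hx
    nlinarith [norm_nonneg h, norm_nonneg (k x - k x0)]
end evK

lemma vec_add {a b : ℝ} {φ ψ : ℝ → ℂ} (hφ : MemLp φ 2 (nu a b)) (hψ : MemLp ψ 2 (nu a b)) :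
    vec a b (fun x => φ x + ψ x) = vec a b φ + vec a b ψ := by
  apply Lp.ext
  filter_upwards [vec_ae hφ, vec_ae hψ, vec_ae (hφ.add hψ), Lp.coeFn_add (vec a b φ) (vec a b ψ)] with x h1 h2 h3 h4
  rw [h4, Pi.add_apply, h1, h2]; exact h3

lemma vec_smul {a b : ℝ} {φ : ℝ → ℂ} (c : ℝ) (hφ : MemLp φ 2 (nu a b)) :
    vec a b (fun x => (c : ℂ) * φ x) = c • vec a b φ := by
  apply Lp.ext
  filter_upwards [vec_ae hφ, vec_ae (hφ.const_mul (c : ℂ)), Lp.coeFn_smul c (vec a b φ)] with x h1 h2 h4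
  rw [h4, Pi.smul_apply, h1]; rw [Complex.real_smul]; exact h2

lemma norm_vec_sq {a b : ℝ} (hab : a ≤ b) {φ : ℝ → ℂ} (hφ : MemLp φ 2 (nu a b)) :
    ‖vec a b φ‖ ^ 2 = ∫ x in a..b, ‖φ x‖ ^ 2 := by
  rw [← real_inner_self_eq_norm_sq, inner_vec hab hφ hφ]
  congr 1; ext x
  rw [← Complex.normSq_eq_conj_mul_self, Complex.ofReal_re, Complex.normSq_eq_norm_sq]

lemma norm_vec_le {a b : ℝ} (hab : a ≤ b) {φ : ℝ → ℂ} (hφ : MemLp φ 2 (nu a b)) {B : ℝ} (hB : 0 ≤ B)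
    (h : ∀ x ∈ Icc a b, ‖φ x‖ ≤ B) : ‖vec a b φ‖ ≤ B * √(b - a) := by
  apply le_of_sq_le_sq _ (by positivity)
  rw [norm_vec_sq hab hφ, mul_pow, Real.sq_sqrt (by linarith)]
  have := intervalIntegral.norm_integral_le_of_norm_le_const (a := a) (b := b) (f := fun x => ‖φ x‖ ^ 2) (C := B ^ 2) (by
    intro x hx
    rw [uIoc_of_le hab] at hx
    have := h x ⟨hx.1.le, hx.2⟩
    rw [Real.norm_eq_abs, abs_of_nonneg (by positivity)]
    gcongr)
  rw [abs_of_nonneg (by linarith)] at this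
  exact (le_abs_self _).trans this

/-- multiplication operator -/
lemma exists_mulV {a b : ℝ} (hab : a ≤ b) {φ : ℝ → ℂ} (hφ : ContinuousOn φ (Icc a b)) :
    ∃ M : (BoundedContinuousFunction (Icc a b) ℝ) →L[ℝ] HH a b, ∀ g, M g = vec a b (fun x => φ x * (IccExtend hab g x : ℝ)) := by
  have hc : ∀ g : BoundedContinuousFunction (Icc a b) ℝ, ContinuousOn (fun x => φ x * ((IccExtend hab g x : ℝ) : ℂ)) (Icc a b) :=
    fun g => hφ.mul (Complex.continuous_ofReal.comp (g.continuous.Icc_extend')).continuousOn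
  obtain ⟨B, hB, hb⟩ := exists_bound hφ
  refine ⟨LinearMap.mkContinuous
    { toFun := fun g => vec a b (fun x => φ x * (IccExtend hab g x : ℝ))
      map_add' := fun g h => ?_
      map_smul' := fun c h => ?_ } (B * √(b - a)) ?_, fun g => rfl⟩
  · rw [← vec_add (memLp_of_cont (hc g)) (memLp_of_cont (hc h))]
    congr 1; ext x
    simp [IccExtend, mul_add]
  · rw [RingHom.id_apply, ← vec_smul c (memLp_of_cont (hc h))]
    congr 1; ext x
    simp [IccExtend]; ring
  · intro g
    have := norm_vec_le hab (memLp_of_cont (hc g)) (B := B * ‖g‖) (by positivity) (by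
      intro x hx
      rw [norm_mul, Complex.norm_real]
      gcongr
      · exact hb x hx
      · exact g.norm_coe_le_norm _)
    simp only [LinearMap.coe_mk, AddHom.coe_mk]
    linarith

/-- cut-off kernel -/
lemma exists_kern {a b : ℝ} (hab : a ≤ b) {φ : ℝ → ℂ} (hφ : ContinuousOn φ (Icc a b)) :
    (∃ k : BoundedContinuousFunction (Icc a b) (HH a b), ∀ x, k x = vec a b (indicator (Iic (x:ℝ)) φ)) ∧
    (∃ k : BoundedContinuousFunction (Icc a b) (HH a b), ∀ x, k x = vec a b (indicator (Ici (x:ℝ)) φ)) := by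
  have hm := memLp_of_cont hφ
  have m1 : ∀ x : ℝ, MemLp (indicator (Iic x) φ) 2 (nu a b) := fun x => hm.indicator measurableSet_Iic
  have m2 : ∀ x : ℝ, MemLp (indicator (Ici x) φ) 2 (nu a b) := fun x => hm.indicator measurableSet_Ici
  have m3 : ∀ x y : ℝ, MemLp (indicator (Ioc x y) φ) 2 (nu a b) := fun x y => hm.indicator measurableSet_Ioc
  obtain ⟨B, hB, hb⟩ := exists_bound hφ
  have nb : ∀ x y, a ≤ x → x ≤ y → y ≤ b → ‖vec a b (indicator (Ioc x y) φ)‖ ≤ B * √ (y - x) := by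
    intro x y hax hxy hyb
    apply le_of_sq_le_sq _ (by positivity)
    rw [norm_vec_sq hab (m3 x y), mul_pow, Real.sq_sqrt (by linarith)]
    have e : (fun u => ‖indicator (Ioc x y) φ u‖ ^ 2) = indicator (Ioc x y) (fun u => ‖φ u‖ ^ 2) := by
      ext u; by_cases hu : u ∈ Ioc x y <;> simp [hu]
    rw [e, intervalIntegral.integral_of_le hab, setIntegral_indicator measurableSet_Ioc,
      inter_eq_right.2 (Ioc_subset_Ioc hax hyb), ← intervalIntegral.integral_of_le hxy]
    have := intervalIntegral.norm_integral_le_of_norm_le_const (a := x) (b := y) (f := fun x => ‖φ x‖ ^ 2) (C := B ^ 2) (by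
      intro u hu
      rw [uIoc_of_le hxy] at hu
      have := hb u ⟨hax.trans hu.1.le, hu.2.trans hyb⟩
      rw [Real.norm_eq_abs, abs_of_nonneg (by positivity)]
      gcongr)
    rw [abs_of_nonneg (by linarith)] at this
    exact (le_abs_self _).trans this
  have e1 : ∀ x y : ℝ, x ≤ y → vec a b (indicator (Iic y) φ) = vec a b (indicator (Iic x) φ) + vec a b (indicator (Ioc x y) φ) := by
    intro x y hxy
    rw [← vec_add (m1 x) (m3 x y)]
    congr 1; ext u
    rw [← Iic_union_Ioc_eq_Iic hxy, indicator_union_of_disjoint (Iic_disjoint_Ioc le_rfl)]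
  have e2 : ∀ x y : ℝ, x ≤ y → vec a b (indicator (Ici x) φ) = vec a b (indicator (Ici y) φ) + vec a b (indicator (Ioc x y) φ) := by
    intro x y hxy
    rw [← vec_add (m2 y) (m3 x y)]
    apply Lp.ext
    refine (vec_ae (m2 x)).trans (EventuallyEq.trans ?_ (vec_ae ((m2 y).add (m3 x y))).symm)
    have hne : ∀ᵐ u ∂(nu a b), u ≠ x ∧ u ≠ y := by
      apply ae_restrict_of_ae
      have h1 : ∀ᵐ u ∂(volume : Measure ℝ), u ≠ x := by simp [ae_iff]
      have h2 : ∀ᵐ u ∂(volume : Measure ℝ), u ≠ y := by simp [ae_iff]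
      filter_upwards [h1, h2] with u h1 h2 using ⟨h1, h2⟩
    filter_upwards [hne] with u hu
    simp only [Pi.add_apply, indicator, mem_Ici, mem_Ioc]
    rcases lt_or_gt_of_ne hu.1 with h | h
    · rw [if_neg (by linarith), if_neg (by linarith), if_neg (by intro hh; linarith [hh.1])]; simp
    · rcases lt_or_gt_of_ne hu.2 with h' | h'
      · rw [if_pos h.le, if_neg (by linarith), if_pos ⟨h, h'.le⟩]; simp
      · rw [if_pos h.le, if_pos h'.le, if_neg (by intro hh; linarith [hh.2])]; simp
  have cont : ∀ k : Icc a b → HH a b, (∀ x y : Icc a b, (x:ℝ) ≤ y → ‖k x - k y‖ ≤ B * √ (y - x)) → Continuous k := by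
    intro k hk
    have hk' : ∀ x y : Icc a b, dist (k x) (k y) ≤ B * √ |(x:ℝ) - y| := by
      intro x y
      rcases le_total (x:ℝ) y with h | h
      · rw [dist_eq_norm, abs_sub_comm, abs_of_nonneg (by linarith)]; exact hk x y h
      · rw [dist_comm, dist_eq_norm, abs_of_nonneg (by linarith)]; exact hk y x h
    rw [continuous_iff_continuousAt]
    intro y
    rw [ContinuousAt, tendsto_iff_dist_tendsto_zero]
    refine squeeze_zero (fun _ => dist_nonneg) (fun x => hk' x y) ?_
    have : Continuous (fun x : Icc a b => B * √ |(x:ℝ) - y|) := by fun_prop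
    simpa using this.tendsto y
  constructor
  · refine ⟨BoundedContinuousFunction.mkOfCompact ⟨fun x => vec a b (indicator (Iic (x:ℝ)) φ), cont _ ?_⟩, fun x => rfl⟩
    intro x y hxy
    rw [e1 x y hxy, sub_add_cancel_left, norm_neg]
    exact nb x y x.2.1 hxy y.2.2
  · refine ⟨BoundedContinuousFunction.mkOfCompact ⟨fun x => vec a b (indicator (Ici (x:ℝ)) φ), cont _ ?_⟩, fun x => rfl⟩
    intro x y hxy
    rw [e2 x y hxy, add_sub_cancel_left]
    exact nb x y x.2.1 hxy y.2.2

end DiracExp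

end

noncomputable section
open Set Filter Topology MeasureTheory ComplexConjugate
namespace DiracExp

lemma swap_int {a b : ℝ} (hab : a ≤ b) {A B : ℝ → ℝ} (hA : IntervalIntegrable A volume a b)
    (hB : IntervalIntegrable B volume a b) :
    (∫ x in a..b, A x * ∫ y in x..b, B y) = ∫ y in a..b, B y * ∫ x in a..y, A x := by
  rw [intervalIntegrable_iff_integrableOn_Ioc_of_le hab] at hA hB
  have hms : MeasurableSet {q : ℝ × ℝ | q.1 < q.2} := measurableSet_lt measurable_fst measurable_snd
  have hi : Integrable (Function.uncurry fun x y => indicator {q : ℝ × ℝ | q.1 < q.2} (fun q => A q.1 * B q.2) (x, y))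
      ((volume.restrict (Ioc a b)).prod (volume.restrict (Ioc a b))) := by
    exact (Integrable.mul_prod hA hB).indicator hms
  have key := integral_integral_swap hi
  rw [intervalIntegral.integral_of_le hab, intervalIntegral.integral_of_le hab]
  refine Eq.trans ?_ (key.trans ?_)
  · apply setIntegral_congr_fun measurableSet_Ioc
    intro x hx
    have e : ∀ y, indicator {q : ℝ × ℝ | q.1 < q.2} (fun q => A q.1 * B q.2) (x, y) = A x * indicator (Ioi x) B y := by
      intro y; by_cases h : x < y <;> simp [indicator, h]
    simp only [e]
    rw [integral_const_mul, setIntegral_indicator measurableSet_Ioi, intervalIntegral.integral_of_le hx.2]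
    congr 3
    ext y; simp only [mem_inter_iff, mem_Ioc, mem_Ioi]
    constructor
    · rintro ⟨h1, h2⟩; exact ⟨⟨hx.1.trans h1, h2⟩, h1⟩
    · rintro ⟨⟨_, h1⟩, h2⟩; exact ⟨h2, h1⟩
  · apply setIntegral_congr_fun measurableSet_Ioc
    intro y hy
    have e : ∀ x, indicator {q : ℝ × ℝ | q.1 < q.2} (fun q => A q.1 * B q.2) (x, y) = B y * indicator (Iio y) A x := by
      intro x; by_cases h : x < y <;> simp [indicator, h, mul_comm]
    simp only [e]
    rw [integral_const_mul, setIntegral_indicator measurableSet_Iio, intervalIntegral.integral_of_le hy.1.le,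
      integral_Ioc_eq_integral_Ioo]
    congr 3
    ext x; simp only [mem_inter_iff, mem_Ioc, mem_Iio, mem_Ioo]
    constructor
    · rintro ⟨⟨h1, _⟩, h2⟩; exact ⟨h1, h2⟩
    · rintro ⟨h1, h2⟩; exact ⟨⟨h1, h2.le.trans hy.2⟩, h2⟩

/-- density of the functional -/
def dens (φ : ℝ → ℂ) (h : ℝ → ℂ) (y : ℝ) : ℝ := (conj (φ y) * h y).re

lemma dens_ii {a b : ℝ} (hab : a ≤ b) {φ : ℝ → ℂ} (hφ : MemLp φ 2 (nu a b)) (h : HH a b) :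
    IntervalIntegrable (dens φ h) volume a b := by
  rw [intervalIntegrable_iff_integrableOn_Icc_of_le hab]
  have h1 : MemLp (fun x => conj (φ x)) 2 (nu a b) := hφ.star
  exact (h1.integrable_mul (Lp.memLp h)).re

lemma inner_cut {a b : ℝ} (hab : a ≤ b) {φ : ℝ → ℂ} (hφ : MemLp φ 2 (nu a b)) (h : HH a b) {x : ℝ} (hx : x ∈ Icc a b) :
    inner ℝ (vec a b (indicator (Iic x) φ)) h = (∫ y in a..x, dens φ h y) ∧
    inner ℝ (vec a b (indicator (Ici x) φ)) h = ∫ y in x..b, dens φ h y := by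
  constructor
  · rw [inner_vec_left hab (hφ.indicator measurableSet_Iic)]
    have e : (fun y => (conj (indicator (Iic x) φ y) * h y).re) = indicator (Iic x) (dens φ h) := by
      ext y; by_cases hy : y ∈ Iic x <;> simp [hy, dens]
    rw [e, intervalIntegral.integral_of_le hab, setIntegral_indicator measurableSet_Iic, intervalIntegral.integral_of_le hx.1]
    congr 2
    ext y; simp only [mem_inter_iff, mem_Ioc, mem_Iic]
    constructor
    · rintro ⟨⟨h1, _⟩, h2⟩; exact ⟨h1, h2⟩
    · rintro ⟨h1, h2⟩; exact ⟨⟨h1, h2.trans hx.2⟩, h2⟩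
  · rw [inner_vec_left hab (hφ.indicator measurableSet_Ici)]
    have e : (fun y => (conj (indicator (Ici x) φ y) * h y).re) = indicator (Ici x) (dens φ h) := by
      ext y; by_cases hy : y ∈ Ici x <;> simp [hy, dens]
    rw [e, intervalIntegral.integral_of_le hab, ← integral_Icc_eq_integral_Ioc, setIntegral_indicator measurableSet_Ici, intervalIntegral.integral_of_le hx.2, ← integral_Icc_eq_integral_Ioc]
    congr 2
    ext y; simp only [mem_inter_iff, mem_Icc, mem_Ici]
    constructor
    · rintro ⟨⟨_, h1⟩, h2⟩; exact ⟨h2, h1⟩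
    · rintro ⟨h1, h2⟩; exact ⟨⟨hx.1.trans h1, h2⟩, h1⟩

/-- Green function applied to `h` -/
def YY (a b : ℝ) (ρ : ℝ → ℝ) (u v : ℝ → ℂ) (W : ℝ) (h : ℝ → ℂ) (x : ℝ) : ℂ :=
  ((W⁻¹ : ℝ) : ℂ) * (v x * ((∫ y in a..x, dens (wv ρ u) h y : ℝ) : ℂ) + u x * ((∫ y in x..b, dens (wv ρ v) h y : ℝ) : ℂ))

lemma DData.green_op {a b : ℝ} {ρ s : ℝ → ℝ} {m : ℝ → ℂ} (D : DData a b ρ s m) {u v : ℝ → ℂ}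
    (hu : ContinuousOn u (Icc a b)) (hv : ContinuousOn v (Icc a b)) (W : ℝ) :
    ∃ T : HH a b →L[ℝ] HH a b, IsCompactOperator T ∧ T.IsSymmetric ∧
      ∀ h : HH a b, ContinuousOn (YY a b ρ u v W h) (Icc a b) ∧ T h = vec a b (wv ρ (YY a b ρ u v W h)) := by
  have hab := D.hab.le
  have cu := D.wv_cont hu
  have cv := D.wv_cont hv
  have mu := D.wv_memLp hu
  have mv := D.wv_memLp hv
  obtain ⟨Mu, hMu⟩ := exists_mulV hab cu
  obtain ⟨Mv, hMv⟩ := exists_mulV hab cv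
  obtain ⟨k1, hk1⟩ := (exists_kern hab cu).1
  obtain ⟨k2, hk2⟩ := (exists_kern hab cv).2
  have hP : ∀ h : HH a b, ∀ x ∈ Icc a b, IccExtend hab (evK k1 h) x = ∫ y in a..x, dens (wv ρ u) h y := by
    intro h x hx
    rw [IccExtend_of_mem _ _ hx, evK_apply, hk1]
    exact (inner_cut hab mu h hx).1
  have hQ : ∀ h : HH a b, ∀ x ∈ Icc a b, IccExtend hab (evK k2 h) x = ∫ y in x..b, dens (wv ρ v) h y := by
    intro h x hx
    rw [IccExtend_of_mem _ _ hx, evK_apply, hk2]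
    exact (inner_cut hab mv h hx).2
  have cP : ∀ h : HH a b, ContinuousOn (fun x => ∫ y in a..x, dens (wv ρ u) h y) (Icc a b) := fun h =>
    ((evK k1 h).continuous.Icc_extend' (h := hab)).continuousOn.congr fun x hx => (hP h x hx).symm
  have cQ : ∀ h : HH a b, ContinuousOn (fun x => ∫ y in x..b, dens (wv ρ v) h y) (Icc a b) := fun h =>
    ((evK k2 h).continuous.Icc_extend' (h := hab)).continuousOn.congr fun x hx => (hQ h x hx).symm
  have cY : ∀ h : HH a b, ContinuousOn (YY a b ρ u v W h) (Icc a b) := fun h =>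
    continuousOn_const.mul ((hv.mul (Complex.continuous_ofReal.comp_continuousOn (cP h))).add
      (hu.mul (Complex.continuous_ofReal.comp_continuousOn (cQ h))))
  let T : HH a b →L[ℝ] HH a b := W⁻¹ • (Mv.comp (evK k1) + Mu.comp (evK k2))
  have hT : ∀ h : HH a b, T h = vec a b (wv ρ (YY a b ρ u v W h)) := by
    intro h
    have c1 : ContinuousOn (fun x => wv ρ v x * ((IccExtend hab (evK k1 h) x : ℝ) : ℂ)) (Icc a b) :=
      cv.mul (Complex.continuous_ofReal.comp ((evK k1 h).continuous.Icc_extend')).continuousOn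
    have c2 : ContinuousOn (fun x => wv ρ u x * ((IccExtend hab (evK k2 h) x : ℝ) : ℂ)) (Icc a b) :=
      cu.mul (Complex.continuous_ofReal.comp ((evK k2 h).continuous.Icc_extend')).continuousOn
    have c3 : ContinuousOn (fun x => wv ρ v x * ((IccExtend hab (evK k1 h) x : ℝ) : ℂ) +
        wv ρ u x * ((IccExtend hab (evK k2 h) x : ℝ) : ℂ)) (Icc a b) := c1.add c2
    show W⁻¹ • (Mv (evK k1 h) + Mu (evK k2 h)) = _
    rw [hMv, hMu, ← vec_add (memLp_of_cont c1) (memLp_of_cont c2), ← vec_smul _ (memLp_of_cont c3)]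
    apply vec_congr (memLp_of_cont (continuousOn_const.mul c3))
    intro x hx
    simp only [Pi.mul_apply, hP h x hx, hQ h x hx, wv, YY]
    ring
  have hin : ∀ h g : HH a b, inner ℝ (T h) g = W⁻¹ * ((∫ x in a..b, dens (wv ρ v) g x * ∫ y in a..x, dens (wv ρ u) h y) +
      ∫ x in a..b, dens (wv ρ v) h x * ∫ y in a..x, dens (wv ρ u) g y) := by
    intro h g
    rw [hT h, inner_vec_left hab (D.wv_memLp (cY h)), ← swap_int hab (dens_ii hab mu g) (dens_ii hab mv h),
      ← intervalIntegral.integral_add, ← intervalIntegral.integral_const_mul]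
    · congr 1; ext x
      simp only [wv, YY, dens]
      generalize (∫ y in a..x, (conj ((√(ρ y) : ℂ) * u y) * h y).re) = p
      generalize (∫ y in x..b, (conj ((√(ρ y) : ℂ) * v y) * h y).re) = q
      simp
      ring
    · exact (dens_ii hab mv g).mul_continuousOn (by rw [uIcc_of_le hab]; exact cP h)
    · exact (dens_ii hab mu g).mul_continuousOn (by rw [uIcc_of_le hab]; exact cQ h)
  refine ⟨T, ?_, ?_, fun h => ⟨cY h, hT h⟩⟩
  · exact (((evK_compact k1).clm_comp Mv).add ((evK_compact k2).clm_comp Mu)).smul W⁻¹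
  · intro h g
    show inner ℝ (T h) g = inner ℝ h (T g)
    rw [real_inner_comm _ h, hin, hin]
    ring

end DiracExp

end

noncomputable section
open Set Filter Topology MeasureTheory ComplexConjugate
namespace DiracExp

lemma ae_zero_of_prim {a b : ℝ} (hab : a ≤ b) {φ : ℝ → ℝ} (hφ : IntervalIntegrable φ volume a b)
    (h : ∀ x ∈ Icc a b, (∫ y in a..x, φ y) = 0) : ∀ᵐ x ∂(nu a b), φ x = 0 := by
  rw [ae_restrict_iff' measurableSet_Icc]
  have h₁ : ∀ᵐ x : ℝ, x ≠ a := by simp [ae_iff, measure_singleton]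
  have h₂ : ∀ᵐ x : ℝ, x ≠ b := by simp [ae_iff, measure_singleton]
  filter_upwards [hφ.ae_hasDerivAt_integral, h₁, h₂] with x hx h1 h2 hxI
  rw [uIcc_of_le hab] at hx
  have hd := hx hxI a (left_mem_Icc.2 hab)
  have hxo : x ∈ Ioo a b := ⟨lt_of_le_of_ne hxI.1 h1.symm, lt_of_le_of_ne hxI.2 h2⟩
  have h0 : HasDerivAt (fun x => ∫ y in a..x, φ y) 0 x := by
    refine (hasDerivAt_const x (0:ℝ)).congr_of_eventuallyEq ?_
    filter_upwards [Icc_mem_nhds hxo.1 hxo.2] with y hy using h y hy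
  exact hd.unique h0

lemma IsSol.lin {a b : ℝ} {ρ s : ℝ → ℝ} {m : ℝ → ℂ} {lam : ℝ} {z w : ℝ → ℂ} (c d : ℝ)
    (hz : IsSol a b ρ s m lam z) (hw : IsSol a b ρ s m lam w) :
    IsSol a b ρ s m lam (fun x => (c:ℂ) * z x + (d:ℂ) * w x) := by
  intro x hx
  refine (((hz x hx).const_mul (c:ℂ)).add ((hw x hx).const_mul (d:ℂ))).congr_deriv ?_
  simp only [map_add, map_mul, Complex.conj_ofReal]
  ring

lemma bc_lin (β c d : ℝ) (z w : ℂ) : bc β ((c:ℂ) * z + (d:ℂ) * w) = c * bc β z + d * bc β w := by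
  simp [bc]; ring

lemma wronsk {a b : ℝ} {ρ s : ℝ → ℝ} {m : ℝ → ℂ} (D : DData a b ρ s m) {lam : ℝ} {u v : ℝ → ℂ}
    (hu : IsSol a b ρ s m lam u) (hv : IsSol a b ρ s m lam v) :
    ∀ x ∈ Icc a b, (u x * conj (v x)).im = (u a * conj (v a)).im := by
  have hd : ∀ x ∈ Icc a b, HasDerivWithinAt (fun x => (u x * conj (v x)).im) 0 (Icc a b) x := by
    intro x hx
    have h1 : HasDerivWithinAt (fun x => conj (v x)) _ (Icc a b) x := (hv x hx).star
    have h2 := Complex.imCLM.hasFDerivAt.comp_hasDerivWithinAt x ((hu x hx).mul h1)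
    refine h2.congr_deriv ?_
    simp
    ring
  exact constant_of_has_deriv_right_zero (fun x hx => (hd x hx).continuousWithinAt) (fun x hx => deriv_Ici hx (hd x (Ico_subset_Icc_self hx)))

lemma sol_zero {a b : ℝ} {ρ s : ℝ → ℝ} {m : ℝ → ℂ} (D : DData a b ρ s m) {lam : ℝ} {u : ℝ → ℂ}
    (hu : IsSol a b ρ s m lam u) (h0 : u a = 0) : ∀ x ∈ Icc a b, u x = 0 := by
  obtain ⟨K, hK, h⟩ := D.bounds
  intro x hx
  have := (h lam u hu).1 x hx
  rw [h0, norm_zero, mul_zero] at this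
  exact norm_le_zero_iff.1 this

/-- eigenvectors of the Green operator are eigenfunctions -/
lemma eig_sol {a b : ℝ} {ρ s : ℝ → ℝ} {m : ℝ → ℂ} (D : DData a b ρ s m) {μ W κ : ℝ} {u v : ℝ → ℂ}
    (hu : IsSol a b ρ s m μ u) (hv : IsSol a b ρ s m μ v) (hW : W ≠ 0)
    (hWr : ∀ x ∈ Icc a b, (u x * conj (v x)).im = W) {h Y : ℝ → ℂ}
    (hYe : YY a b ρ u v W h = Y)
    (hY : ContinuousOn Y (Icc a b)) (hh : ∀ᵐ x ∂(nu a b), h x = (κ:ℂ) * wv ρ Y x) :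
    IsSol a b ρ s m (μ + κ) Y ∧ (∃ c : ℝ, Y a = c * u a) ∧ ∃ c : ℝ, Y b = c * v b := by
  have hab := D.hab.le
  have hde : ∀ w : ℝ → ℂ, ∀ᵐ x ∂(nu a b), dens (wv ρ w) h x = κ * (ρ x * (conj (w x) * Y x).re) := by
    intro w
    have h0 : ∀ᵐ x ∂(nu a b), x ∈ Icc a b := ae_restrict_mem measurableSet_Icc
    filter_upwards [hh, h0] with x hx hxI
    rw [dens, hx, ← D.wv_mul hxI]
    rw [mul_left_comm, Complex.re_ofReal_mul]
  have hInt0 : ∀ w : ℝ → ℂ, ∀ x y, a ≤ x → x ≤ y → y ≤ b →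
      (∫ t in x..y, dens (wv ρ w) h t) = ∫ t in x..y, κ * (ρ t * (conj (w t) * Y t).re) := by
    intro w x y hax hxy hyb
    rw [intervalIntegral.integral_of_le hxy, intervalIntegral.integral_of_le hxy]
    apply integral_congr_ae
    exact ae_restrict_of_ae_restrict_of_subset (s := Ioc x y) (t := Icc a b) (fun t ht => ⟨hax.trans ht.1.le, ht.2.trans hyb⟩) (hde w)
  have hc : ∀ w : ℝ → ℂ, ContinuousOn w (Icc a b) → ContinuousOn (fun t => κ * (ρ t * (conj (w t) * Y t).re)) (Icc a b) := by
    intro w hw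
    exact continuousOn_const.mul (D.hρ.continuousOn.mul (Complex.continuous_re.comp_continuousOn
      ((Complex.continuous_conj.comp_continuousOn hw).mul hY)))
  set p : ℝ → ℝ := fun t => κ * (ρ t * (conj (u t) * Y t).re) with hp
  set q : ℝ → ℝ := fun t => κ * (ρ t * (conj (v t) * Y t).re) with hq
  have cp : ContinuousOn p (Icc a b) := hc u hu.continuousOn
  have cq : ContinuousOn q (Icc a b) := hc v hv.continuousOn
  have hYx : ∀ x ∈ Icc a b, Y x = ((W⁻¹ : ℝ) : ℂ) * (v x * ((prim a p x : ℝ) : ℂ) + u x * ((prim a q b - prim a q x : ℝ) : ℂ)) := by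
    intro x hx
    have iq := ii_of_cont hab cq
    have e : (∫ t in x..b, q t) = prim a q b - prim a q x := by
      unfold prim
      rw [intervalIntegral.integral_interval_sub_left iq
        (iq.mono_set (by rw [uIcc_of_le hab, uIcc_of_le hx.1]; exact Icc_subset_Icc_right hx.2))]
    have := congrFun hYe x
    rw [← this, YY, hInt0 u a x le_rfl hx.1 hx.2, hInt0 v x b hx.1 hx.2 le_rfl, e]
    rfl
  refine ⟨?_, ⟨W⁻¹ * prim a q b, ?_⟩, ⟨W⁻¹ * prim a p b, ?_⟩⟩
  · intro x hx
    have d1 := (prim_hasDeriv hab cp hx).ofReal_comp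
    have d2 := ((prim_hasDeriv hab cq hx).const_sub (prim a q b)).ofReal_comp
    have d3 := (((hv x hx).mul d1).add ((hu x hx).mul d2)).const_mul ((W⁻¹ : ℝ) : ℂ)
    refine HasDerivWithinAt.congr (f := fun x => ((W⁻¹ : ℝ) : ℂ) * (v x * ((prim a p x : ℝ) : ℂ) + u x * ((prim a q b - prim a q x : ℝ) : ℂ))) (d3.congr_deriv ?_) hYx (hYx x hx)
    have key : v x * ((conj (u x) * Y x).re : ℂ) - u x * ((conj (v x) * Y x).re : ℂ) = -Complex.I * (W : ℂ) * Y x := by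
      rw [← hWr x hx]
      apply Complex.ext <;> simp <;> ring
    have hWc : ((W⁻¹ : ℝ) : ℂ) * (W : ℂ) = 1 := by
      rw [← Complex.ofReal_mul, inv_mul_cancel₀ hW]; simp
    have hYc : conj (Y x) = ((W⁻¹ : ℝ) : ℂ) * (conj (v x) * ((prim a p x : ℝ) : ℂ) + conj (u x) * ((prim a q b - prim a q x : ℝ) : ℂ)) := by
      rw [hYx x hx]; simp only [map_mul, map_add, Complex.conj_ofReal]
    have ep : ((p x : ℝ) : ℂ) = κ * ρ x * ((conj (u x) * Y x).re : ℂ) := by simp only [hp]; push_cast; ring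
    have eq : ((-q x : ℝ) : ℂ) = -(κ * ρ x * ((conj (v x) * Y x).re : ℂ)) := by simp only [hq]; push_cast; ring
    rw [hYc, ep, eq]
    have e5 : -Complex.I * (((μ + κ) * ρ x - s x : ℝ) : ℂ) * Y x = -Complex.I * ((μ * ρ x - s x : ℝ) : ℂ) * (((W⁻¹ : ℝ) : ℂ) * (v x * ((prim a p x : ℝ) : ℂ) + u x * ((prim a q b - prim a q x : ℝ) : ℂ))) - Complex.I * κ * ρ x * Y x := by
      rw [← hYx x hx]; push_cast; ring
    rw [e5]
    linear_combination ((W⁻¹ : ℝ) : ℂ) * κ * ρ x * key + (-Complex.I * κ * ρ x * Y x) * hWc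
  · rw [hYx a (left_mem_Icc.2 hab), prim_self, prim_self]; push_cast; ring
  · rw [hYx b (right_mem_Icc.2 hab), sub_self]; push_cast; ring

lemma complete {a b : ℝ} {ρ s : ℝ → ℝ} {m : ℝ → ℂ} (D : DData a b ρ s m) {α β : ℝ} {ι : Type*} [Countable ι] [Nonempty ι]
    {lam : ι → ℝ} {z : ι → ℝ → ℂ} (sol : ∀ n, IsSol a b ρ s m (lam n) (z n))
    (bca : ∀ n, bc α (z n a) = 0) (za : ∀ n, z n a ≠ 0)
    (compl : ∀ μ w, IsSol a b ρ s m μ w → w a ≠ 0 → bc α (w a) = 0 → bc β (w b) = 0 → ∃ n, lam n = μ)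
    (h : HH a b) (ho : ∀ n, inner ℝ (vec a b (wv ρ (z n))) h = 0) : h = 0 := by
  have hab := D.hab.le
  obtain ⟨μ, hμ⟩ : ∃ μ : ℝ, μ ∉ range lam := by
    by_contra hc
    push Not at hc
    exact Cardinal.not_countable_real ((countable_range lam).mono (fun x _ => hc x))
  obtain ⟨w1, h1a, h1⟩ := D.exists_sol μ 1
  obtain ⟨w2, h2a, h2⟩ := D.exists_sol μ Complex.I
  set c1 : ℝ := -bc β (w2 b) with hc1
  set c2 : ℝ := bc β (w1 b) with hc2
  set u : ℝ → ℂ := fun x => ((-Real.sin α : ℝ) : ℂ) * w1 x + ((Real.cos α : ℝ) : ℂ) * w2 x with hu_def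
  set v : ℝ → ℂ := fun x => (c1 : ℂ) * w1 x + (c2 : ℂ) * w2 x with hv_def
  have hu : IsSol a b ρ s m μ u := h1.lin _ _ h2
  have hv : IsSol a b ρ s m μ v := h1.lin _ _ h2
  have hua : u a = ((-Real.sin α : ℝ) : ℂ) + ((Real.cos α : ℝ) : ℂ) * Complex.I := by
    simp only [hu_def, h1a, h2a, mul_one]
  have hbu : bc α (u a) = 0 := by rw [hua]; simp [bc, -Complex.ofReal_sin, -Complex.ofReal_cos]; ring
  have hua0 : u a ≠ 0 := by
    intro h0
    rw [hua] at h0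
    have e1 := congrArg Complex.re h0
    have e2 := congrArg Complex.im h0
    simp [-Complex.ofReal_sin, -Complex.ofReal_cos] at e1 e2
    have := Real.sin_sq_add_cos_sq α
    rw [e1, e2] at this; norm_num at this
  have hbv : bc β (v b) = 0 := by simp only [hv_def, bc_lin, hc1, hc2]; ring
  obtain ⟨W, hWdef⟩ : ∃ W, W = (u a * conj (v a)).im := ⟨_, rfl⟩
  have hWr : ∀ x ∈ Icc a b, (u x * conj (v x)).im = W := hWdef ▸ wronsk D hu hv
  have hbub : bc β (u b) ≠ 0 := by
    intro h0
    obtain ⟨n, hn⟩ := compl μ u hu hua0 hbu h0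
    exact hμ ⟨n, hn⟩
  have hWe : W = -bc β (u b) := by
    simp only [hWdef, hv_def, h1a, h2a, hu_def, bc_lin, hc1, hc2]
    simp [-Complex.ofReal_sin, -Complex.ofReal_cos]
    ring
  have hW : W ≠ 0 := by rw [hWe]; exact neg_ne_zero.2 hbub
  obtain ⟨T, hTc, hTs, hT⟩ := D.green_op hu.continuousOn hv.continuousOn W
  have key := ContinuousLinearMap.orthogonalComplement_iSup_eigenspaces_eq_bot hTc hTs
  have hmem : h ∈ (⨆ ν, Module.End.eigenspace (T : Module.End ℝ (HH a b)) ν)ᗮ := by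
    rw [Submodule.mem_orthogonal']
    suffices (⨆ ν, Module.End.eigenspace (T : Module.End ℝ (HH a b)) ν) ≤ LinearMap.ker (innerSL ℝ h : HH a b →ₗ[ℝ] ℝ) by
      intro g hg
      exact this hg
    refine iSup_le fun ν g hg => ?_
    rw [Module.End.mem_eigenspace_iff] at hg
    change T g = ν • g at hg
    show inner ℝ h g = 0
    obtain ⟨hYc, hTg⟩ := hT g
    set Y := YY a b ρ u v W g with hYdef
    have hYae := vec_ae (D.wv_memLp hYc)
    rw [← hTg, hg] at hYae
    rcases eq_or_ne ν 0 with rfl | hν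
    · -- the kernel is trivial
      suffices g = 0 by rw [this, inner_zero_right]
      have hY0 : EqOn (wv ρ Y) 0 (Icc a b) := by
        refine Measure.eqOn_Icc_of_ae_eq volume D.hab.ne ?_ (D.wv_cont hYc) continuousOn_const
        filter_upwards [hYae, Lp.coeFn_zero ℂ 2 (nu a b)] with x hx h0
        rw [← hx, zero_smul, h0]
      have hPQ : ∀ x ∈ Icc a b, (∫ y in a..x, dens (wv ρ u) g y) = 0 ∧ (∫ y in x..b, dens (wv ρ v) g y) = 0 := by
        intro x hx
        have e0 := hY0 hx
        have hsq : ((√(ρ x) : ℝ) : ℂ) ≠ 0 := by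
          rw [Complex.ofReal_ne_zero]; exact (Real.sqrt_pos.2 (D.hpos x hx)).ne'
        have e1 : Y x = 0 := by
          simpa [wv, hsq] using e0
        rw [hYdef, YY] at e1
        have hWc : ((W⁻¹ : ℝ) : ℂ) ≠ 0 := by rw [Complex.ofReal_ne_zero]; exact inv_ne_zero hW
        have e2 := (mul_eq_zero.1 e1).resolve_left hWc
        generalize (∫ y in a..x, dens (wv ρ u) g y) = P at e2 ⊢
        generalize (∫ y in x..b, dens (wv ρ v) g y) = Q at e2 ⊢
        have hw := hWr x hx
        have r1 := congrArg Complex.re e2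
        have r2 := congrArg Complex.im e2
        simp at r1 r2 hw
        constructor
        · have : P * W = 0 := by rw [← hw]; linear_combination (u x).im * r1 - (u x).re * r2
          exact (mul_eq_zero.1 this).resolve_right hW
        · have : Q * W = 0 := by rw [← hw]; linear_combination (v x).re * r2 - (v x).im * r1
          exact (mul_eq_zero.1 this).resolve_right hW
      have iu := dens_ii hab (D.wv_memLp hu.continuousOn) g
      have iv := dens_ii hab (D.wv_memLp hv.continuousOn) g
      have z1 := ae_zero_of_prim hab iu (fun x hx => (hPQ x hx).1)
      have z2 := ae_zero_of_prim hab iv (fun x hx => by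
        have i1 : IntervalIntegrable (dens (wv ρ v) g) volume a x := iv.mono_set (by
          rw [uIcc_of_le hab, uIcc_of_le hx.1]; exact Icc_subset_Icc_right hx.2)
        have i2 : IntervalIntegrable (dens (wv ρ v) g) volume x b := iv.mono_set (by
          rw [uIcc_of_le hab, uIcc_of_le hx.2]; exact Icc_subset_Icc_left hx.1)
        have := intervalIntegral.integral_add_adjacent_intervals i1 i2
        rw [(hPQ x hx).2, (hPQ a (left_mem_Icc.2 hab)).2] at this
        linarith)
      apply Lp.ext
      have h0 : ∀ᵐ x ∂(nu a b), x ∈ Icc a b := ae_restrict_mem measurableSet_Icc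
      filter_upwards [z1, z2, h0, Lp.coeFn_zero ℂ 2 (nu a b)] with x k1 k2 hx k3
      rw [k3, Pi.zero_apply]
      have hsq := (Real.sqrt_pos.2 (D.hpos x hx)).ne'
      have hw := hWr x hx
      simp only [dens, wv, map_mul, Complex.conj_ofReal, mul_assoc, Complex.re_ofReal_mul] at k1 k2
      have k1' := (mul_eq_zero.1 k1).resolve_left hsq
      have k2' := (mul_eq_zero.1 k2).resolve_left hsq
      simp at k1' k2' hw
      apply Complex.ext
      · have : (g x : ℂ).re * W = 0 := by
          rw [← hw]; linear_combination (u x).im * k2' - (v x).im * k1'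
        simpa using (mul_eq_zero.1 this).resolve_right hW
      · have : (g x : ℂ).im * W = 0 := by
          rw [← hw]; linear_combination (v x).re * k1' - (u x).re * k2'
        simpa using (mul_eq_zero.1 this).resolve_right hW
    · have hgY : g = ν⁻¹ • vec a b (wv ρ Y) := by
        rw [← hTg, hg, smul_smul, inv_mul_cancel₀ hν, one_smul]
      have hae : ∀ᵐ x ∂(nu a b), g x = ((ν⁻¹ : ℝ) : ℂ) * wv ρ Y x := by
        filter_upwards [hYae, Lp.coeFn_smul ν g] with x k1 k2
        rw [← k1, k2, Pi.smul_apply, Complex.real_smul, ← mul_assoc, ← Complex.ofReal_mul, inv_mul_cancel₀ hν]; simp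
      obtain ⟨hsol, ⟨ca, hca⟩, ⟨cb, hcb⟩⟩ := eig_sol D hu hv hW hWr hYdef.symm hYc hae
      have hYa : bc α (Y a) = 0 := by
        rw [hca]; have := bc_lin α ca 0 (u a) 0; simpa [hbu] using this
      have hYb : bc β (Y b) = 0 := by
        rw [hcb]; have := bc_lin β cb 0 (v b) 0; simpa [hbv] using this
      have hprop : ∃ (n : ι) (c : ℝ), ∀ x ∈ Icc a b, Y x = c * z n x := by
        by_cases hY0 : Y a = 0
        · exact ⟨Classical.arbitrary ι, 0, fun x hx => by rw [sol_zero D hsol hY0 x hx]; simp⟩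
        · obtain ⟨n, hn⟩ := compl _ Y hsol hY0 hYa hYb
          obtain ⟨κ, hκ⟩ := bc_repr hYa
          obtain ⟨κ', hκ'⟩ := bc_repr (bca n)
          have hk0 : κ' ≠ 0 := by
            rintro rfl; apply za n; rw [hκ']; simp
          refine ⟨n, κ / κ', fun x hx => ?_⟩
          have hs := (hsol.lin 1 (-(κ / κ')) (hn ▸ sol n))
          have := sol_zero D hs (by
            have : (κ' : ℂ) ≠ 0 := by exact_mod_cast hk0
            simp only [hκ, hκ']; push_cast; field_simp; ring) x hx
          push_cast at this ⊢
          linear_combination this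
      obtain ⟨n, c, hn⟩ := hprop
      have e : vec a b (wv ρ Y) = c • vec a b (wv ρ (z n)) := by
        rw [← vec_smul c (D.wv_memLp (sol n).continuousOn)]
        apply vec_congr (D.wv_memLp hYc)
        intro x hx
        simp only [wv]; rw [hn x hx]; ring
      rw [hgY, e, inner_smul_right, inner_smul_right, real_inner_comm, ho]; simp
  rw [key] at hmem
  exact (Submodule.mem_bot ℝ).1 hmem

end DiracExp

end

noncomputable section
open Set Filter Topology MeasureTheory ComplexConjugate
namespace DiracExp

lemma IsSol.conj_sol {a b : ℝ} {ρ s : ℝ → ℝ} {m : ℝ → ℂ} {lam : ℝ} {z : ℝ → ℂ}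
    (h : IsSol a b ρ s m lam z) :
    IsSol a b ρ (fun x => - s x) (fun x => conj (m x)) (-lam) (fun x => conj (z x)) := by
  intro x hx
  have := (Complex.conjCLE.toContinuousLinearMap.hasFDerivAt.comp_hasDerivWithinAt x (h x hx))
  refine this.congr_deriv ?_
  simp
  ring

lemma IsSol.of_conj {a b : ℝ} {ρ s : ℝ → ℝ} {m : ℝ → ℂ} {lam : ℝ} {z : ℝ → ℂ}
    (h : IsSol a b ρ (fun x => - s x) (fun x => conj (m x)) lam z) :
    IsSol a b ρ s m (-lam) (fun x => conj (z x)) := by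
  have := h.conj_sol
  simpa using this

lemma bc_conj (α : ℝ) (z : ℂ) : bc (-α) (conj z) = bc α z := by
  simp [bc]

lemma DData.conj_data {a b : ℝ} {ρ s : ℝ → ℝ} {m : ℝ → ℂ} (D : DData a b ρ s m) :
    DData a b ρ (fun x => - s x) (fun x => conj (m x)) :=
  ⟨D.hab, D.hρ, D.hpos, D.hs.neg, Complex.conjCLE.contDiff.comp_contDiffOn D.hm⟩

lemma tendsto_top_of_abs {u : ℕ → ℝ} (h : Tendsto (fun n => |u n|) atTop atTop) (hb : ∀ n, u 0 ≤ u n) :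
    Tendsto u atTop atTop := by
  rw [tendsto_atTop] at h ⊢
  intro c
  filter_upwards [h (max c (|u 0| + 1))] with n hn
  have h1 := hb n
  rcases le_total 0 (u n) with h2 | h2
  · rw [abs_of_nonneg h2] at hn
    exact (le_max_left _ _).trans hn
  · rw [abs_of_nonpos h2] at hn
    have := (le_max_right c (|u 0| + 1)).trans hn
    have := neg_abs_le (u 0)
    linarith

lemma conj_mul_conj_re (z w : ℂ) : (conj (conj z) * conj w).re = (conj z * w).re := by
  simp

lemma sum_split {E : Type*} [AddCommGroup E] (u : ℤ → E) (N : ℕ) :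
    ∑ n ∈ Finset.Icc (-(N:ℤ)) N, u n =
      ∑ n ∈ Finset.range (N+1), u (n:ℤ) + ∑ n ∈ Finset.range (N+1), u (-(n:ℤ)) - u 0 := by
  induction N with
  | zero => simp
  | succ N ih =>
    have : Finset.Icc (-((N+1:ℕ):ℤ)) ((N+1:ℕ):ℤ) =
      insert (-((N+1:ℕ):ℤ)) (insert ((N+1:ℕ):ℤ) (Finset.Icc (-(N:ℤ)) N)) := by
      ext k; simp only [Finset.mem_Icc, Finset.mem_insert]; omega
    rw [this, Finset.sum_insert, Finset.sum_insert, ih, Finset.sum_range_succ _ (N+1),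
      Finset.sum_range_succ _ (N+1)]
    · abel
    · simp
    · simp only [Finset.mem_Icc, Finset.mem_insert]; omega

section Fin
variable {a b : ℝ} {ρ s : ℝ → ℝ} {m : ℝ → ℂ} {α β : ℝ} {lam : ℤ → ℝ} {z : ℤ → ℝ → ℂ}

lemma half_pos (sol : ∀ n, IsSol a b ρ s m (lam n) (z n))
    (bca : ∀ n, bc α (z n a) = 0) (bcb : ∀ n, bc β (z n b) = 0) (mono : Monotone lam)
    (grow : Tendsto (fun n : ℤ => |lam n|) cofinite atTop)
    (orth : ∀ k n, (∫ x in a..b, ρ x * (conj (z k x) * z n x).re) = if k = n then 1 else 0)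
    (compl : ∀ μ w, IsSol a b ρ s m μ w → w a ≠ 0 → bc α (w a) = 0 → bc β (w b) = 0 → ∃ n, lam n = μ) :
    Half a b ρ s m α β (fun n : ℕ => lam n) (fun n : ℕ => z n) where
  sol n := sol n
  bca n := bca n
  bcb n := bcb n
  mono i j hij := mono (by exact_mod_cast hij)
  top := by
    apply tendsto_top_of_abs
    · have h1 : Tendsto (fun n : ℕ => (n:ℤ)) atTop cofinite := by
        rw [← Nat.cofinite_eq_atTop]
        exact Nat.cast_injective.tendsto_cofinite
      exact grow.comp h1
    · intro n; exact mono (by positivity)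
  orth k n := by rw [orth]; simp
  compl μ w hμ hw h1 h2 h3 := by
    obtain ⟨n, hn⟩ := compl μ w hw h1 h2 h3
    have : 0 ≤ n := by
      by_contra hneg
      push Not at hneg
      have := mono hneg.le
      simp only [Nat.cast_zero] at hμ
      linarith
    exact ⟨n.toNat, by simp only [Int.toNat_of_nonneg this]; exact hn⟩

lemma half_neg (sol : ∀ n, IsSol a b ρ s m (lam n) (z n))
    (bca : ∀ n, bc α (z n a) = 0) (bcb : ∀ n, bc β (z n b) = 0) (mono : Monotone lam)
    (grow : Tendsto (fun n : ℤ => |lam n|) cofinite atTop)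
    (orth : ∀ k n, (∫ x in a..b, ρ x * (conj (z k x) * z n x).re) = if k = n then 1 else 0)
    (compl : ∀ μ w, IsSol a b ρ s m μ w → w a ≠ 0 → bc α (w a) = 0 → bc β (w b) = 0 → ∃ n, lam n = μ) :
    Half a b ρ (fun x => - s x) (fun x => conj (m x)) (-α) (-β) (fun n : ℕ => -lam (-(n:ℤ)))
      (fun n : ℕ => fun x => conj (z (-(n:ℤ)) x)) := by
  refine half_pos (lam := fun n => - lam (-n)) (z := fun n x => conj (z (-n) x)) (fun n => (sol _).conj_sol)
    (fun n => by rw [bc_conj]; exact bca _) (fun n => by rw [bc_conj]; exact bcb _)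
    (fun i j h => neg_le_neg (mono (neg_le_neg h))) ?_ ?_ ?_
  · simp only [abs_neg]
    exact grow.comp neg_injective.tendsto_cofinite
  · intro k n
    simp only [conj_mul_conj_re]
    rw [orth]; simp
  · intro μ w hw h1 h2 h3
    obtain ⟨n, hn⟩ := compl (-μ) _ hw.of_conj (by simpa using h1)
      (by rw [← bc_conj]; simpa using h2) (by rw [← bc_conj]; simpa using h3)
    exact ⟨-n, by simp [hn]⟩

/-- Continuous interior limit. -/
lemma ptwise (D : DData a b ρ s m) (sol : ∀ n, IsSol a b ρ s m (lam n) (z n))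
    (bca : ∀ n, bc α (z n a) = 0) (bcb : ∀ n, bc β (z n b) = 0) (mono : Monotone lam)
    (grow : Tendsto (fun n : ℤ => |lam n|) cofinite atTop)
    (orth : ∀ k n, (∫ x in a..b, ρ x * (conj (z k x) * z n x).re) = if k = n then 1 else 0)
    (compl : ∀ μ w, IsSol a b ρ s m μ w → w a ≠ 0 → bc α (w a) = 0 → bc β (w b) = 0 → ∃ n, lam n = μ)
    {F : ℝ → ℂ} (hF : ContDiffOn ℝ 1 F (Icc a b)) {c d : ℝ} (hc : a < c) (hcd : c ≤ d) (hd : d < b) :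
    ∃ S : ℝ → ℂ, ContinuousOn S (Icc c d) ∧ ∀ x ∈ Icc c d,
      Tendsto (fun N : ℕ => ∑ n ∈ Finset.Icc (-(N:ℤ)) N,
        ((∫ y in a..b, ρ y * (conj (z n y) * F y).re : ℝ) : ℂ) * z n x) atTop (𝓝 (S x)) := by
  have hsub : Icc c d ⊆ Icc a b := Icc_subset_Icc hc.le hd.le
  obtain ⟨S1, h1⟩ := (half_pos sol bca bcb mono grow orth compl).conv D hF hc hd
  obtain ⟨S2, h2⟩ := (half_neg sol bca bcb mono grow orth compl).conv D.conj_data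
    (F := fun x => conj (F x)) (Complex.conjCLE.contDiff.comp_contDiffOn hF) hc hd
  simp only [conj_mul_conj_re] at h2
  have hz : ∀ n, ContinuousOn (z n) (Icc c d) := fun n => (sol n).continuousOn.mono hsub
  have hzc : ∀ n, ContinuousOn (fun x => conj (z n x)) (Icc c d) := fun n =>
    Complex.continuous_conj.comp_continuousOn (hz n)
  set C : ℤ → ℝ := fun n => ∫ y in a..b, ρ y * (conj (z n y) * F y).re with hC
  have key : ∀ x (hx : x ∈ Icc c d), Tendsto (fun N : ℕ => ∑ n ∈ Finset.Icc (-(N:ℤ)) N,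
        (C n : ℂ) * z n x) atTop (𝓝 (S1 ⟨x, hx⟩ + conj (S2 ⟨x, hx⟩) - (C 0 : ℂ) * z 0 x)) := by
    intro x hx
    have e1 := ((continuous_eval_const (F := C(Icc c d, ℂ)) (⟨x, hx⟩ : Icc c d)).tendsto S1).comp h1
    have e2 := (Complex.continuous_conj.tendsto _).comp
      (((continuous_eval_const (F := C(Icc c d, ℂ)) (⟨x, hx⟩ : Icc c d)).tendsto S2).comp h2)
    have e3 := (((e1.comp (tendsto_add_atTop_nat 1)).add (e2.comp (tendsto_add_atTop_nat 1)))).sub_const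
      ((C 0 : ℂ) * z 0 x)
    refine e3.congr fun N => ?_
    rw [sum_split (fun n => (C n : ℂ) * z n x)]
    simp only [Function.comp, ContinuousMap.coe_sum, Finset.sum_apply, ContinuousMap.smul_apply,
      rst_apply (hz _), rst_apply (hzc _), Complex.real_smul, map_sum, map_mul, Complex.conj_ofReal, Complex.conj_conj]
    rfl
  refine ⟨fun x => S1 (projIcc c d hcd x) + conj (S2 (projIcc c d hcd x)) - (C 0 : ℂ) * z 0 x, ?_, ?_⟩
  · refine ContinuousOn.sub (Continuous.continuousOn ?_) (continuousOn_const.mul (hz 0))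
    exact (S1.continuous.comp continuous_projIcc).add
      (Complex.continuous_conj.comp (S2.continuous.comp continuous_projIcc))
  · intro x hx
    have := key x hx
    simpa only [projIcc_of_mem hcd hx] using this

lemma vec_sum (D : DData a b ρ s m) {ι : Type*} {z : ι → ℝ → ℂ} (hz : ∀ n, ContinuousOn (z n) (Icc a b))
    (C : ι → ℝ) (t : Finset ι) :
    vec a b (wv ρ (fun x => ∑ n ∈ t, (C n : ℂ) * z n x)) = ∑ n ∈ t, C n • vec a b (wv ρ (z n)) := by
  classical
  induction t using Finset.induction_on with
  | empty =>
    simp only [Finset.sum_empty]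
    have := vec_smul (a := a) (b := b) 0 (D.wv_memLp (φ := fun _ => 0) continuousOn_const)
    rw [zero_smul] at this
    rw [← this]
    congr 1
    ext x; simp [wv]
  | insert i t hi ih =>
    simp only [Finset.sum_insert hi]
    have hs : ContinuousOn (fun x => ∑ n ∈ t, (C n : ℂ) * z n x) (Icc a b) :=
      continuousOn_finsetSum _ fun n _ => continuousOn_const.mul (hz n)
    rw [← ih, ← vec_smul _ (D.wv_memLp (hz i)), ← vec_add]
    · congr 1
      ext x; simp only [wv]; ring
    · have := D.wv_memLp (φ := fun x => (C i : ℂ) * z i x) (continuousOn_const.mul (hz i))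
      convert this using 1
      ext x; simp only [wv]; ring
    · exact D.wv_memLp hs

lemma final (D : DData a b ρ s m) (sol : ∀ n, IsSol a b ρ s m (lam n) (z n))
    (bca : ∀ n, bc α (z n a) = 0) (bcb : ∀ n, bc β (z n b) = 0) (mono : Monotone lam)
    (grow : Tendsto (fun n : ℤ => |lam n|) cofinite atTop)
    (orth : ∀ k n, (∫ x in a..b, ρ x * (conj (z k x) * z n x).re) = if k = n then 1 else 0)
    (compl : ∀ μ w, IsSol a b ρ s m μ w → w a ≠ 0 → bc α (w a) = 0 → bc β (w b) = 0 → ∃ n, lam n = μ)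
    {F : ℝ → ℂ} (hF : ContDiffOn ℝ 1 F (Icc a b)) {x : ℝ} (hx : x ∈ Ioo a b) :
      Tendsto (fun N : ℕ => ∑ n ∈ Finset.Icc (-(N:ℤ)) N,
        ((∫ y in a..b, ρ y * (conj (z n y) * F y).re : ℝ) : ℂ) * z n x) atTop (𝓝 (F x)) := by
  obtain ⟨hxa, hxb⟩ := hx
  obtain ⟨c, hc, hcx⟩ := exists_between hxa
  obtain ⟨d, hxd, hd⟩ := exists_between hxb
  obtain ⟨S, hS, hlim⟩ := ptwise D sol bca bcb mono grow orth compl hF hc (hcx.trans hxd).le hd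
  have hsub : Icc c d ⊆ Icc a b := Icc_subset_Icc hc.le hd.le
  have hz : ∀ n, ContinuousOn (z n) (Icc a b) := fun n => (sol n).continuousOn
  set C : ℤ → ℝ := fun n => ∫ y in a..b, ρ y * (conj (z n y) * F y).re with hC
  suffices hEq : EqOn S F (Icc c d) by
    rw [← hEq ⟨hcx.le, hxd.le⟩]
    exact hlim x ⟨hcx.le, hxd.le⟩
  have ho : Orthonormal ℝ (fun n => vec a b (wv ρ (z n))) := by
    rw [orthonormal_iff_ite]
    intro i j
    rw [D.inner_wv (hz i) (hz j), orth]
  have za : ∀ n, z n a ≠ 0 := by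
    intro n h0
    have h1 := orth n n
    rw [if_pos rfl, intervalIntegral.integral_congr (g := fun _ => (0:ℝ))] at h1
    · simp at h1
    · intro y hy
      rw [uIcc_of_le D.hab.le] at hy
      simp [sol_zero D (sol n) h0 y hy]
  have hperp : (Submodule.span ℝ (range fun n => vec a b (wv ρ (z n))))ᗮ = ⊥ := by
    rw [Submodule.eq_bot_iff]
    intro h hh
    refine complete D sol bca za compl h fun n => ?_
    exact (Submodule.mem_orthogonal _ _).1 hh _ (Submodule.subset_span ⟨n, rfl⟩)
  have hs := (HilbertBasis.mkOfOrthogonalEqBot ho hperp).hasSum_repr (vec a b (wv ρ F))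
  simp only [HilbertBasis.repr_apply_apply, HilbertBasis.coe_mkOfOrthogonalEqBot,
    D.inner_wv (hz _) hF.continuousOn] at hs
  have ht : Tendsto (fun N : ℕ => vec a b (wv ρ (fun x => ∑ n ∈ Finset.Icc (-(N:ℤ)) N, (C n : ℂ) * z n x)))
      atTop (𝓝 (vec a b (wv ρ F))) := by
    have := Tendsto.comp hs (Finset.tendsto_Icc_neg (R := ℤ))
    refine this.congr fun N => ?_
    rw [vec_sum D hz]
    rfl
  have hm := tendstoInMeasure_of_tendsto_Lp ht
  obtain ⟨ns, hns, hae⟩ := hm.exists_seq_tendsto_ae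
  have hsc : ∀ N : ℕ, ContinuousOn (fun x => ∑ n ∈ Finset.Icc (-(N:ℤ)) N, (C n : ℂ) * z n x) (Icc a b) :=
    fun N => continuousOn_finsetSum _ fun n _ => continuousOn_const.mul (hz n)
  have hall := ae_all_iff.2 fun N => vec_ae (D.wv_memLp (hsc N))
  have hFae := vec_ae (D.wv_memLp hF.continuousOn)
  have hfin : S =ᵐ[volume.restrict (Icc c d)] F := by
    have h1 : ∀ᵐ y ∂(nu a b), y ∈ Icc c d → S y = F y := by
      filter_upwards [hae, hall, hFae, ae_restrict_mem measurableSet_Icc] with y h1 h2 h3 hyab hy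
      rw [h3] at h1
      have h4 : Tendsto (fun i => wv ρ (fun x => ∑ n ∈ Finset.Icc (-(ns i:ℤ)) (ns i), (C n : ℂ) * z n x) y)
          atTop (𝓝 (wv ρ F y)) := h1.congr fun i => h2 (ns i)
      have h5 := ((hlim y hy).comp hns.tendsto_atTop).const_mul (√(ρ y) : ℂ)
      have h6 := tendsto_nhds_unique h5 h4
      have hne : (√(ρ y) : ℂ) ≠ 0 := by
        have := Real.sqrt_pos.2 (D.hpos y hyab)
        exact_mod_cast this.ne'
      exact mul_left_cancel₀ hne h6
    have h2 := ae_restrict_of_ae_restrict_of_subset hsub h1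
    filter_upwards [h2, ae_restrict_mem measurableSet_Icc] with y h3 h4 using h3 h4
  exact Measure.eqOn_Icc_of_ae_eq volume (hcx.trans hxd).ne hfin hS (hF.continuousOn.mono hsub)

end Fin
end DiracExp

end

/-- For every `x ∈ (a,b)` the symmetric partial sums
`S_N(x) = ∑_{n=-N}^{N} C_n (f_n(x), g_n(x))` converge to `(F₁(x), F₂(x))`. -/
theorem dirac_expansion_converges_interior
    (a b : ℝ) (hab : a < b)
    (p q t ρ : ℝ → ℝ)
    (hp : ContDiffOn ℝ 1 p (Set.Icc a b)) (hq : ContDiffOn ℝ 1 q (Set.Icc a b))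
    (ht : ContDiffOn ℝ 1 t (Set.Icc a b)) (hρ : ContDiffOn ℝ 1 ρ (Set.Icc a b))
    (hρpos : ∀ x ∈ Set.Icc a b, 0 < ρ x)
    (α β : ℝ) (hα : α ∈ Set.Ico 0 (2 * Real.pi)) (hβ : β ∈ Set.Ico 0 (2 * Real.pi))
    -- the listing of all eigenvalues with eigenfunctions
    (lam : ℤ → ℝ) (f g : ℤ → ℝ → ℝ)
    (heig : ∀ n : ℤ, SatisfiesDiracSystem a b p q t ρ (lam n) (f n) (g n) ∧
      DiracBC a b α β (f n) (g n))
    (hord : ∀ n : ℤ, lam n ≤ lam (n + 1))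
    (hgrow : Filter.Tendsto (fun n : ℤ => |lam n|) Filter.cofinite Filter.atTop)
    (hcomplete : ∀ μ : ℝ, IsDiracEigenvalue a b p q t ρ α β μ → ∃ n, lam n = μ)
    (horth : ∀ m n : ℤ,
      (∫ x in a..b, ρ x * (f m x * f n x + g m x * g n x)) = if m = n then 1 else 0)
    -- the expanded function and its expansion coefficients
    (F₁ F₂ : ℝ → ℝ)
    (hF₁ : ContDiffOn ℝ 1 F₁ (Set.Icc a b)) (hF₂ : ContDiffOn ℝ 1 F₂ (Set.Icc a b))
    (C : ℤ → ℝ)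
    (hC : ∀ n, C n = ∫ x in a..b, ρ x * (f n x * F₁ x + g n x * F₂ x)) :
    ∀ x ∈ Set.Ioo a b,
      Filter.Tendsto
        (fun N : ℕ =>
          ((∑ n ∈ Finset.Icc (-(N : ℤ)) (N : ℤ), C n * f n x),
           (∑ n ∈ Finset.Icc (-(N : ℤ)) (N : ℤ), C n * g n x)))
        Filter.atTop (nhds (F₁ x, F₂ x)) := by
  intro x hx
  have hcd : ∀ {h : ℝ → ℝ}, ContDiffOn ℝ 1 h (Set.Icc a b) →
      ContDiffOn ℝ 1 (fun x => (h x : ℂ)) (Set.Icc a b) := fun h =>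
    Complex.ofRealCLM.contDiff.comp_contDiffOn h
  have D : DiracExp.DData a b ρ (fun x => (p x + q x) / 2)
      (fun x => -(t x : ℂ) + Complex.I * ((p x - q x) / 2 : ℝ)) := by
    refine ⟨hab, hρ, hρpos, (hp.continuousOn.add hq.continuousOn).div_const 2, ?_⟩
    exact (hcd ht).neg.add (contDiffOn_const.mul (hcd ((hp.sub hq).div_const 2)))
  have hre : ∀ (u v w y : ℝ), (starRingEnd ℂ ((u:ℂ) + (v:ℂ) * Complex.I) * ((w:ℂ) + (y:ℂ) * Complex.I)).re
      = u * w + v * y := by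
    intro u v w y; simp
  have hbc : ∀ (γ u v : ℝ), DiracExp.bc γ ((u:ℂ) + (v:ℂ) * Complex.I) = u * Real.cos γ + v * Real.sin γ := by
    intro γ u v; simp [DiracExp.bc]
  have key := DiracExp.final D (α := α) (β := β) (lam := lam)
    (z := fun n x => (f n x : ℂ) + (g n x : ℂ) * Complex.I)
    (F := fun x => (F₁ x : ℂ) + (F₂ x : ℂ) * Complex.I)
    (fun n => DiracExp.isSol_of_satisfies (heig n).1)
    (fun n => by rw [hbc]; exact (heig n).2.1) (fun n => by rw [hbc]; exact (heig n).2.2)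
    (monotone_int_of_le_succ hord) hgrow (fun k n => by simp only [hre]; exact horth k n)
    (fun μ w hw h1 h2 h3 => by
      refine hcomplete μ ⟨_, _, DiracExp.satisfies_of_isSol hp.continuousOn hq.continuousOn
        ht.continuousOn hρ.continuousOn hw, ⟨a, Set.left_mem_Icc.2 hab.le, ?_⟩, h2, h3⟩
      by_contra hn
      push Not at hn
      exact h1 (Complex.ext hn.1 hn.2))
    ((hcd hF₁).add ((hcd hF₂).mul contDiffOn_const)) hx
  simp only [hre, ← hC] at key
  refine Filter.Tendsto.prodMk_nhds ?_ ?_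
  · have := (Complex.continuous_re.tendsto _).comp key
    simpa [Function.comp_def] using this
  · have := (Complex.continuous_im.tendsto _).comp key
    simpa [Function.comp_def] using this
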